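/- arXiv:0707.2421 — 2 statements merged into one kernel-verified Lean document; each statement's English description precedes it below -/
import Mathlib

section
/- Let a, b ≥ 0 be integers. (i) For g = C2 and for g = G2, the lattice L_g(a,b) is isomorphic to its edge-colored dual — that is, there exists a bijection φ of L_g(a,b) with itself such that, for all S, T and each γ ∈ {α, β}, S ⋖ T is a covering edge of color γ if and only if φ(T) ⋖ φ(S) is a covering edge of color γ — if and only if a = 0 or b = 0. (ii) For g = A2, the lattice L_A2(a,b) is isomorphic to its edge-colored dual with the colors α and β interchanged — that is, there exists a bijection φ such that S ⋖ T has color α (respectively β) if and only if φ(T) ⋖ φ(S) has color β (respectively α) — if and only if a = 0 or b = 0. (These statements are equivalent to: for each rank two simple Lie algebra g, L_g^{βα}(a,b) is isomorphic as an edge-colored poset to L_g^{αβ}(a,b) if and only if a = 0 or b = 0.) -/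
/-!
The three families of tableaux are instances of one pattern (`TabSystem`): a finite list of legal
columns and relations between pairs of columns, so that a filling is a tableau exactly when all its
columns are legal and every two of them are related. For `G2` the conditions are imposed on adjacent
columns only, but they define transitive relations, hence they hold for all pairs (`SG2_eq`).

If `a = 0` or `b = 0`, reading the tableau backwards and replacing every entry `k` by `N + 1 - k`
is an involution that reverses the covering edges and acts on the colors by `σ`
(`TabSystem.cov_dual`).

If `a` and `b` are both positive, compare the two ends of the lattice. The tableau `M` with columns
`(1,2)` and `(1)` has no upper cover, so a duality `φ` sends it to an element without lower covers;
the only such element is the tableau `m` with columns `(N-1,N)` and `(N)` (`TabSystem.eq_bot`).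
Changing the last `1` of `M` into `2` gives `x` below `M` by an `α` edge, and `x` has two lower
covers by `β` edges: the new `2` may become `3`, and so may the lower entry of the last `(1,2)`.
Hence `φ x` lies above `m` by a `σ α` edge and has two upper covers of color `σ β`. But an element
above `m` by a `σ α` edge differs from `m` by a single `N - 1` among the length-one columns, which
cannot decrease further because the columns `(N-1,N)` stand to its left, so the only upper
cover of color `σ β` changes the first column to `(N-2,N)` (`TabSystem.upper_unique`).
-/

/-- The two colors (simple-root labels) `α` and `β`. -/
inductive TwoColor : Type
  | alpha : TwoColor
  | beta : TwoColor
  deriving DecidableEq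

/-- Lengths of paths of `r`-edges ending at `t`. -/
def chainsEndingAt {V : Type*} (r : V → V → Prop) (t : V) : Set ℕ :=
  {n : ℕ | ∃ c : ℕ → V, c n = t ∧ ∀ i : ℕ, i < n → r (c i) (c (i + 1))}

/-- Lengths of paths of `r`-edges starting at `t`. -/
def chainsStartingAt {V : Type*} (r : V → V → Prop) (t : V) : Set ℕ :=
  {n : ℕ | ∃ c : ℕ → V, c 0 = t ∧ ∀ i : ℕ, i < n → r (c i) (c (i + 1))}

/-- `ρ`: the maximum number of edges in a chain of `r`-edges ending at `t`. -/
noncomputable def rhoOf {V : Type*} (r : V → V → Prop) (t : V) : ℕ :=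
  sSup (chainsEndingAt r t)

/-- `δ`: the maximum number of edges in a chain of `r`-edges starting at `t`. -/
noncomputable def deltaOf {V : Type*} (r : V → V → Prop) (t : V) : ℕ :=
  sSup (chainsStartingAt r t)

/-- `l = ρ + δ`. -/
noncomputable def lenOf {V : Type*} (r : V → V → Prop) (t : V) : ℕ :=
  rhoOf r t + deltaOf r t

/-- The weight `wt(t) = (ρ_α(t) − δ_α(t), ρ_β(t) − δ_β(t))` of an element of an
edge-colored poset whose (colored) covering relations are given by `cov`. -/
noncomputable def wtOf {V : Type*} (cov : TwoColor → V → V → Prop) (t : V) : ℤ × ℤ :=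
  ((rhoOf (cov TwoColor.alpha) t : ℤ) - (deltaOf (cov TwoColor.alpha) t : ℤ),
   (rhoOf (cov TwoColor.beta) t : ℤ) - (deltaOf (cov TwoColor.beta) t : ℤ))

/-- The structure condition for a `2 × 2` integer matrix `M` (given by its rows
`M γ` for `γ ∈ {α, β}`): along any covering edge of color `γ`, the weight changes by `M γ`. -/
def StructureCondition {V : Type*} (cov : TwoColor → V → V → Prop)
    (M : TwoColor → ℤ × ℤ) : Prop :=
  ∀ (γ : TwoColor) (s t : V), cov γ s t → wtOf cov t = wtOf cov s + M γ

/-- The elements of the distributive lattice `J(P)`: order ideals (lower sets) of `P`. -/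
abbrev OrderIdeal (V : Type*) [PartialOrder V] : Type _ := {I : Set V // IsLowerSet I}

/-- The colored covering relation of `J_color(P)` for a vertex-colored poset `P`:
`s ⋖ t` with color `γ` when `t ∖ s` is a single vertex of color `γ`. -/
def idealCov {V : Type*} [PartialOrder V] (vcolor : V → TwoColor) (γ : TwoColor)
    (s t : OrderIdeal V) : Prop :=
  ∃ u : V, vcolor u = γ ∧ u ∉ s.1 ∧ t.1 = insert u s.1
/-- A filling of the shape with `b` columns of length two (each recorded as
(top entry, bottom entry)) followed by `a` columns of length one. -/
abbrev TabT (a b : ℕ) : Type := (Fin b → ℕ × ℕ) × (Fin a → ℕ)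

/-- `n_k(T)`: the number of entries of the tableau `T` equal to `k`. -/
def nkOf {m n : ℕ} (T : (Fin m → ℕ × ℕ) × (Fin n → ℕ)) (k : ℕ) : ℕ :=
  (Finset.univ.filter fun j : Fin m => (T.1 j).1 = k).card +
    (Finset.univ.filter fun j : Fin m => (T.1 j).2 = k).card +
    (Finset.univ.filter fun i : Fin n => T.2 i = k).card

/-- The set of `A2`-semistandard tableaux of shape `(a,b)`: entries from `{1,2,3}`,
rows weakly increasing, columns strictly increasing. -/
def SA2 (a b : ℕ) : Set (TabT a b) :=
  {T | (∀ j : Fin b, 1 ≤ (T.1 j).1 ∧ (T.1 j).1 ≤ 3 ∧ 1 ≤ (T.1 j).2 ∧ (T.1 j).2 ≤ 3 ∧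
          (T.1 j).1 < (T.1 j).2) ∧
       (∀ i : Fin a, 1 ≤ T.2 i ∧ T.2 i ≤ 3) ∧
       (∀ j j' : Fin b, j ≤ j' → (T.1 j).1 ≤ (T.1 j').1 ∧ (T.1 j).2 ≤ (T.1 j').2) ∧
       (∀ i i' : Fin a, i ≤ i' → T.2 i ≤ T.2 i') ∧
       (∀ (j : Fin b) (i : Fin a), (T.1 j).1 ≤ T.2 i)}

/-- The set of `C2`-semistandard tableaux of shape `(a,b)`: entries from `{1,2,3,4}`,
rows weakly increasing, columns strictly increasing, no column equal to `(1,4)`,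
and at most one column equal to `(2,3)`. -/
def SC2 (a b : ℕ) : Set (TabT a b) :=
  {T | (∀ j : Fin b, 1 ≤ (T.1 j).1 ∧ (T.1 j).1 ≤ 4 ∧ 1 ≤ (T.1 j).2 ∧ (T.1 j).2 ≤ 4 ∧
          (T.1 j).1 < (T.1 j).2) ∧
       (∀ i : Fin a, 1 ≤ T.2 i ∧ T.2 i ≤ 4) ∧
       (∀ j j' : Fin b, j ≤ j' → (T.1 j).1 ≤ (T.1 j').1 ∧ (T.1 j).2 ≤ (T.1 j').2) ∧
       (∀ i i' : Fin a, i ≤ i' → T.2 i ≤ T.2 i') ∧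
       (∀ (j : Fin b) (i : Fin a), (T.1 j).1 ≤ T.2 i) ∧
       (∀ j : Fin b, T.1 j ≠ (1, 4)) ∧
       (∀ j j' : Fin b, T.1 j = (2, 3) → T.1 j' = (2, 3) → j = j')}

/-- The restrictions of Figure 4.5 on a pair of adjacent length-two columns of a
`G2`-semistandard tableau. -/
def g2pair2 (c c' : ℕ × ℕ) : Prop :=
  (c = (1, 4) → c' ≠ (1, 4) ∧ c' ≠ (1, 5) ∧ c' ≠ (1, 6) ∧ c' ≠ (1, 7)) ∧
  (c = (1, 5) → c' ≠ (1, 5) ∧ c' ≠ (1, 6) ∧ c' ≠ (1, 7)) ∧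
  (c = (1, 6) → c' ≠ (1, 6) ∧ c' ≠ (1, 7) ∧ c' ≠ (2, 6) ∧ c' ≠ (2, 7)) ∧
  (c = (2, 6) → c' ≠ (2, 6) ∧ c' ≠ (2, 7)) ∧
  (c = (1, 7) → c' ≠ (1, 7) ∧ c' ≠ (2, 7) ∧ c' ≠ (3, 7) ∧ c' ≠ (4, 7)) ∧
  (c = (2, 7) → c' ≠ (2, 7) ∧ c' ≠ (3, 7) ∧ c' ≠ (4, 7)) ∧
  (c = (3, 7) → c' ≠ (3, 7) ∧ c' ≠ (4, 7)) ∧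
  (c = (4, 7) → c' ≠ (4, 7))

/-- The restrictions of Figure 4.5 on a length-two column followed by a
length-one column in a `G2`-semistandard tableau. -/
def g2pair1 (c : ℕ × ℕ) (e : ℕ) : Prop :=
  (c = (1, 4) → e ≠ 1) ∧
  (c = (1, 5) → e ≠ 1) ∧
  (c = (1, 6) → e ≠ 1 ∧ e ≠ 2) ∧
  (c = (2, 6) → e ≠ 2) ∧
  (c = (1, 7) → e ≠ 1 ∧ e ≠ 2 ∧ e ≠ 3 ∧ e ≠ 4) ∧
  (c = (2, 7) → e ≠ 2 ∧ e ≠ 3 ∧ e ≠ 4) ∧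
  (c = (3, 7) → e ≠ 3 ∧ e ≠ 4) ∧
  (c = (4, 7) → e ≠ 4)

/-- The set of `G2`-semistandard tableaux of shape `(a,b)`. -/
def SG2 (a b : ℕ) : Set (TabT a b) :=
  {T | (∀ j : Fin b, 1 ≤ (T.1 j).1 ∧ (T.1 j).1 ≤ 7 ∧ 1 ≤ (T.1 j).2 ∧ (T.1 j).2 ≤ 7 ∧
          (T.1 j).1 < (T.1 j).2) ∧
       (∀ i : Fin a, 1 ≤ T.2 i ∧ T.2 i ≤ 7) ∧
       (∀ j j' : Fin b, j ≤ j' → (T.1 j).1 ≤ (T.1 j').1 ∧ (T.1 j).2 ≤ (T.1 j').2) ∧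
       (∀ i i' : Fin a, i ≤ i' → T.2 i ≤ T.2 i') ∧
       (∀ (j : Fin b) (i : Fin a), (T.1 j).1 ≤ T.2 i) ∧
       (∀ i i' : Fin a, T.2 i = 4 → T.2 i' = 4 → i = i') ∧
       (∀ j : Fin b, T.1 j ≠ (2, 3) ∧ T.1 j ≠ (2, 4) ∧ T.1 j ≠ (3, 4) ∧ T.1 j ≠ (3, 5) ∧
          T.1 j ≠ (4, 5) ∧ T.1 j ≠ (4, 6) ∧ T.1 j ≠ (5, 6)) ∧
       (∀ j j' : Fin b, (j' : ℕ) = (j : ℕ) + 1 → g2pair2 (T.1 j) (T.1 j')) ∧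
       (∀ (j : Fin b) (i : Fin a), (j : ℕ) + 1 = b → (i : ℕ) = 0 → g2pair1 (T.1 j) (T.2 i))}
/-- The edge colors determined by tableau entries: for `A2`, the entry `1` gives
color `α` and the entry `2` gives color `β`. -/
def colEntA2 : ℕ → TwoColor := fun n => if n = 2 then TwoColor.beta else TwoColor.alpha

/-- For `C2`, entries `1` and `3` give color `α` and entry `2` gives color `β`. -/
def colEntC2 : ℕ → TwoColor := fun n => if n = 2 then TwoColor.beta else TwoColor.alpha

/-- For `G2`, entries `1, 3, 4, 6` give color `α` and entries `2, 5` give color `β`. -/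
def colEntG2 : ℕ → TwoColor :=
  fun n => if n = 2 ∨ n = 5 then TwoColor.beta else TwoColor.alpha

/-- The colored covering relation of a lattice of semistandard tableaux:
`T` covers `S` exactly when `S` is obtained from `T` by increasing a single
entry by `1`, and the edge is colored according to the entry of `T`
at the changed position (via `colEnt`). -/
def tabCov {a b : ℕ} (colEnt : ℕ → TwoColor) (SSet : Set (TabT a b)) (γ : TwoColor)
    (S T : {T : TabT a b // T ∈ SSet}) : Prop :=
  (∃ j : Fin b, colEnt ((T.1.1 j).1) = γ ∧
      S.1.1 j = ((T.1.1 j).1 + 1, (T.1.1 j).2) ∧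
      (∀ j' : Fin b, j' ≠ j → S.1.1 j' = T.1.1 j') ∧ S.1.2 = T.1.2) ∨
  (∃ j : Fin b, colEnt ((T.1.1 j).2) = γ ∧
      S.1.1 j = ((T.1.1 j).1, (T.1.1 j).2 + 1) ∧
      (∀ j' : Fin b, j' ≠ j → S.1.1 j' = T.1.1 j') ∧ S.1.2 = T.1.2) ∨
  (∃ i : Fin a, colEnt (T.1.2 i) = γ ∧
      S.1.2 i = T.1.2 i + 1 ∧
      (∀ i' : Fin a, i' ≠ i → S.1.2 i' = T.1.2 i') ∧ S.1.1 = T.1.1)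

/-- The colored covering relation of the lattice `L_A2(a,b)`. -/
def covA2 (a b : ℕ) (γ : TwoColor) (S T : {T : TabT a b // T ∈ SA2 a b}) : Prop :=
  tabCov colEntA2 (SA2 a b) γ S T

/-- The colored covering relation of the lattice `L_C2(a,b)`. -/
def covC2 (a b : ℕ) (γ : TwoColor) (S T : {T : TabT a b // T ∈ SC2 a b}) : Prop :=
  tabCov colEntC2 (SC2 a b) γ S T

/-- The colored covering relation of the lattice `L_G2(a,b)`. -/
def covG2 (a b : ℕ) (γ : TwoColor) (S T : {T : TabT a b // T ∈ SG2 a b}) : Prop :=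
  tabCov colEntG2 (SG2 a b) γ S T

/-- The `A2` Cartan matrix, given by its rows `M_α = (2,−1)`, `M_β = (−1,2)`. -/
def MA2 : TwoColor → ℤ × ℤ
  | TwoColor.alpha => (2, -1)
  | TwoColor.beta => (-1, 2)

/-- The `C2` Cartan matrix, given by its rows `M_α = (2,−1)`, `M_β = (−2,2)`. -/
def MC2 : TwoColor → ℤ × ℤ
  | TwoColor.alpha => (2, -1)
  | TwoColor.beta => (-2, 2)

/-- The `G2` Cartan matrix, given by its rows `M_α = (2,−1)`, `M_β = (−3,2)`. -/
def MG2 : TwoColor → ℤ × ℤ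
  | TwoColor.alpha => (2, -1)
  | TwoColor.beta => (-3, 2)

/-! ### Tableaux systems and their duality -/

/-- The common pattern of the three kinds of tableaux: entries `1, …, N`, colors `col` of the
entries, a finite set `C` of legal length-two columns, and the relations `R2`, `R12`, `R1` required
between a column and a column to its right (of lengths two and two, two and one, one and one).
The permutation `σ` of the colors is the one that a duality has to induce. -/
structure TabSystem where
  N : ℕ
  col : ℕ → TwoColor
  σ : TwoColor → TwoColor
  C : Finset (ℕ × ℕ)
  R2 : ℕ × ℕ → ℕ × ℕ → Prop
  R12 : ℕ × ℕ → ℕ → Prop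
  R1 : ℕ → ℕ → Prop
  three_le : 3 ≤ N
  σσ : ∀ γ, σ (σ γ) = γ
  col_one : col 1 = TwoColor.alpha
  col_two : col 2 = TwoColor.beta
  col_dual : ∀ k ∈ Finset.Icc 1 (N - 1), col (N - k) = σ (col k)
  C_bd : ∀ c ∈ C, 1 ≤ c.1 ∧ c.1 < c.2 ∧ c.2 ≤ N
  C_dual : ∀ c ∈ C, (N + 1 - c.2, N + 1 - c.1) ∈ C
  R2_dual : ∀ c ∈ C, ∀ c' ∈ C, R2 c c' →
    R2 (N + 1 - c'.2, N + 1 - c'.1) (N + 1 - c.2, N + 1 - c.1)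
  R1_dual : ∀ e ∈ Finset.Icc 1 N, ∀ e' ∈ Finset.Icc 1 N, R1 e e' → R1 (N + 1 - e') (N + 1 - e)
  R2_le : ∀ c ∈ C, ∀ c' ∈ C, R2 c c' → c.1 ≤ c'.1
  R12_le : ∀ c ∈ C, ∀ e ∈ Finset.Icc 1 N, R12 c e → c.1 ≤ e
  C_top : ∀ k ∈ Finset.Icc 2 3, (1, k) ∈ C
  R2_top : ∀ k ∈ Finset.Icc 2 3, R2 (1, 2) (1, k)
  R12_top : ∀ k ∈ Finset.Icc 2 3, ∀ e ∈ Finset.Icc 1 3, R12 (1, k) e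
  R1_top : ∀ e ∈ Finset.Icc 1 3, R1 1 e
  C_bot : (N - 1, N) ∈ C
  R2_bot : ∀ c ∈ C, R2 c (N - 1, N)
  R12_bot : ∀ c ∈ C, R12 c N
  R1_bot : ∀ e ∈ Finset.Icc 1 N, R1 e N
  R12_step : ∀ c ∈ C, ∀ e ∈ Finset.Icc 1 (N - 1), R12 c e → R12 c (e + 1)
  R1_step : ∀ e' ∈ Finset.Icc 1 N, ∀ e ∈ Finset.Icc 1 (N - 1), R1 e' e → R1 e' (e + 1)
  C_step : ∀ c ∈ C, c ≠ (N - 1, N) →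
    ((c.1, c.2 + 1) ∈ C ∧ ∀ c' ∈ C, R2 c' c → R2 c' (c.1, c.2 + 1)) ∨
    ((c.1 + 1, c.2) ∈ C ∧ ∀ c' ∈ C, R2 c' c → R2 c' (c.1 + 1, c.2))

namespace TabSystem

variable (D : TabSystem) {a b : ℕ}

/-- The tableaux of shape `(a,b)` of a system. -/
def tableaux (a b : ℕ) : Set (TabT a b) :=
  {T | (∀ j, T.1 j ∈ D.C) ∧ (∀ i, T.2 i ∈ Finset.Icc 1 D.N) ∧
    (∀ j j', j < j' → D.R2 (T.1 j) (T.1 j')) ∧ (∀ i i', i < i' → D.R1 (T.2 i) (T.2 i')) ∧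
    ∀ j i, D.R12 (T.1 j) (T.2 i)}

/-- The covering relation between the tableaux of a system. -/
abbrev cov (γ : TwoColor) (S T : {T : TabT a b // T ∈ D.tableaux a b}) : Prop :=
  tabCov D.col (D.tableaux a b) γ S T

/-- Reversal of the two rows, with every entry `k` replaced by `N + 1 - k`. -/
def dualTab (T : TabT a b) : TabT a b :=
  (fun j => (D.N + 1 - (T.1 j.rev).2, D.N + 1 - (T.1 j.rev).1), fun i => D.N + 1 - T.2 i.rev)

lemma dualTab_mem (h : a = 0 ∨ b = 0) {T : TabT a b} (hT : T ∈ D.tableaux a b) :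
    D.dualTab T ∈ D.tableaux a b := by
  obtain ⟨h1, h2, h3, h4, h5⟩ := hT
  refine ⟨fun j => D.C_dual _ (h1 _), fun i => ?_, fun j j' hj => ?_, fun i i' hi => ?_,
    fun j i => ?_⟩
  · have := h2 i.rev
    simp only [Finset.mem_Icc, dualTab] at this ⊢
    omega
  · exact D.R2_dual _ (h1 _) _ (h1 _) (h3 _ _ (Fin.rev_lt_rev.mpr hj))
  · exact D.R1_dual _ (h2 _) _ (h2 _) (h4 _ _ (Fin.rev_lt_rev.mpr hi))
  · rcases h with rfl | rfl
    · exact i.elim0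
    · exact j.elim0

lemma dualTab_dualTab {T : TabT a b} (hT : T ∈ D.tableaux a b) :
    D.dualTab (D.dualTab T) = T := by
  obtain ⟨h1, h2, -⟩ := hT
  refine Prod.ext (funext fun j => ?_) (funext fun i => ?_)
  · have := D.C_bd _ (h1 j)
    simp only [dualTab, Fin.rev_rev]
    exact Prod.ext (by dsimp only; omega) (by dsimp only; omega)
  · have := Finset.mem_Icc.mp (h2 i)
    simp only [dualTab, Fin.rev_rev]
    omega

lemma cov_dual (h : a = 0 ∨ b = 0) {γ : TwoColor} {S T : {T : TabT a b // T ∈ D.tableaux a b}}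
    (hc : D.cov γ S T) :
    D.cov (D.σ γ) ⟨D.dualTab T, D.dualTab_mem h T.2⟩ ⟨D.dualTab S, D.dualTab_mem h S.2⟩ := by
  have hN := D.three_le
  rcases hc with ⟨j, hγ, hS, hne, hs⟩ | ⟨j, hγ, hS, hne, hs⟩ | ⟨i, hγ, hS, hne, hs⟩
  · have hb := D.C_bd _ (S.2.1 j)
    have hb' := D.C_bd _ (T.2.1 j)
    rw [hS] at hb
    have hcol := D.col_dual (T.1.1 j).1 (Finset.mem_Icc.mpr (by dsimp only at hb; omega))
    refine Or.inr (Or.inl ⟨j.rev, ?_, ?_, ?_, ?_⟩)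
    · simp only [dualTab, Fin.rev_rev, hS]
      rw [← hγ, ← hcol]
      congr 1
      omega
    · simp only [dualTab, Fin.rev_rev, hS, Prod.mk.injEq, true_and]
      dsimp only at hb
      omega
    · intro j' hj'
      simp only [dualTab]
      rw [hne j'.rev (fun e => hj' (by rw [← e, Fin.rev_rev]))]
    · simp only [dualTab, hs]
  · have hb := D.C_bd _ (S.2.1 j)
    have hb' := D.C_bd _ (T.2.1 j)
    rw [hS] at hb
    have hcol := D.col_dual (T.1.1 j).2 (Finset.mem_Icc.mpr (by dsimp only at hb; omega))
    refine Or.inl ⟨j.rev, ?_, ?_, ?_, ?_⟩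
    · simp only [dualTab, Fin.rev_rev, hS]
      rw [← hγ, ← hcol]
      congr 1
      omega
    · simp only [dualTab, Fin.rev_rev, hS, Prod.mk.injEq, and_true]
      dsimp only at hb
      omega
    · intro j' hj'
      simp only [dualTab]
      rw [hne j'.rev (fun e => hj' (by rw [← e, Fin.rev_rev]))]
    · simp only [dualTab, hs]
  · have hb := Finset.mem_Icc.mp (S.2.2.1 i)
    have hb' := Finset.mem_Icc.mp (T.2.2.1 i)
    rw [hS] at hb
    have hcol := D.col_dual (T.1.2 i) (Finset.mem_Icc.mpr (by omega))
    refine Or.inr (Or.inr ⟨i.rev, ?_, ?_, ?_, ?_⟩)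
    · simp only [dualTab, Fin.rev_rev, hS]
      rw [← hγ, ← hcol]
      congr 1
      omega
    · simp only [dualTab, Fin.rev_rev, hS]
      omega
    · intro j' hj'
      simp only [dualTab]
      rw [hne j'.rev (fun e => hj' (by rw [← e, Fin.rev_rev]))]
    · simp only [dualTab, hs]

lemma exists_dual (h : a = 0 ∨ b = 0) :
    ∃ φ : {T : TabT a b // T ∈ D.tableaux a b} → {T : TabT a b // T ∈ D.tableaux a b},
      Function.Bijective φ ∧ ∀ γ S T, D.cov γ S T ↔ D.cov (D.σ γ) (φ T) (φ S) := by
  have hinv : ∀ T : {T : TabT a b // T ∈ D.tableaux a b},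
      (⟨D.dualTab (D.dualTab T), D.dualTab_mem h (D.dualTab_mem h T.2)⟩ :
        {T : TabT a b // T ∈ D.tableaux a b}) = T :=
    fun T => Subtype.ext (D.dualTab_dualTab T.2)
  refine ⟨fun T => ⟨D.dualTab T, D.dualTab_mem h T.2⟩,
    Function.Involutive.bijective hinv, fun γ S T => ⟨D.cov_dual h, fun hc => ?_⟩⟩
  have := D.cov_dual h hc
  rwa [hinv, hinv, D.σσ] at this

/-- The tableau with columns `(N-1,N)` and `(N)`, the least element. -/
def bot (a b : ℕ) : TabT a b := (fun _ => (D.N - 1, D.N), fun _ => D.N)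

lemma exists_last {n : ℕ} (p : Fin n → Prop) (h : ∃ i, p i) :
    ∃ i, p i ∧ ∀ i', i < i' → ¬ p i' := by
  classical
  obtain ⟨i, hi⟩ := h
  obtain ⟨k, hk, hmax⟩ := (Finset.univ.filter p).exists_max_image id ⟨i, by simpa using hi⟩
  refine ⟨k, by simpa using hk, fun i' hlt hp => ?_⟩
  exact absurd (hmax i' (by simpa using hp)) (not_le.mpr hlt)

/-- A legal replacement of the last column different from `(N-1,N)`, when all length-one columns
equal `N`, gives a tableau. -/
lemma update_mem {T : TabT a b} (hT : T ∈ D.tableaux a b) (hs : ∀ i, T.2 i = D.N) (j : Fin b)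
    (hj : ∀ j', j < j' → T.1 j' = (D.N - 1, D.N)) (c : ℕ × ℕ) (hc : c ∈ D.C)
    (hR : ∀ c' ∈ D.C, D.R2 c' (T.1 j) → D.R2 c' c) :
    (Function.update T.1 j c, T.2) ∈ D.tableaux a b := by
  obtain ⟨h1, h2, h3, h4, h5⟩ := hT
  have hC : ∀ k, Function.update T.1 j c k ∈ D.C := fun k => by
    rcases eq_or_ne k j with rfl | hk
    · simpa using hc
    · simpa [hk] using h1 k
  refine ⟨hC, h2, fun k k' hk => ?_, h4, fun k i => ?_⟩
  · dsimp only
    rcases eq_or_ne k' j with rfl | hk'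
    · rw [Function.update_self, Function.update_of_ne hk.ne]
      exact hR _ (h1 _) (h3 _ _ hk)
    · rw [Function.update_of_ne hk']
      rcases eq_or_ne k j with rfl | hk2
      · rw [hj _ hk]
        exact D.R2_bot _ (hC _)
      · rw [Function.update_of_ne hk2]
        exact h3 _ _ hk
  · dsimp only
    rw [hs]
    exact D.R12_bot _ (hC _)

/-- Increasing the last entry different from `N` among the length-one columns gives a tableau. -/
lemma update_mem' {T : TabT a b} (hT : T ∈ D.tableaux a b) (i : Fin a) (hi : T.2 i ≠ D.N)
    (hl : ∀ i', i < i' → T.2 i' = D.N) :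
    (T.1, Function.update T.2 i (T.2 i + 1)) ∈ D.tableaux a b := by
  obtain ⟨h1, h2, h3, h4, h5⟩ := hT
  have hlt : T.2 i ∈ Finset.Icc 1 (D.N - 1) := by
    have := h2 i
    simp only [Finset.mem_Icc] at this ⊢
    omega
  have hE : ∀ k, Function.update T.2 i (T.2 i + 1) k ∈ Finset.Icc 1 D.N := fun k => by
    rcases eq_or_ne k i with rfl | hk
    · simp only [Finset.mem_Icc, Function.update_self] at hlt ⊢
      omega
    · simpa only [Function.update_of_ne hk] using h2 k
  refine ⟨h1, hE, h3, fun k k' hk => ?_, fun j k => ?_⟩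
  · dsimp only
    rcases eq_or_ne k' i with rfl | hk'
    · rw [Function.update_self, Function.update_of_ne hk.ne]
      exact D.R1_step _ (h2 _) _ hlt (h4 _ _ hk)
    · rw [Function.update_of_ne hk']
      rcases eq_or_ne k i with rfl | hk2
      · rw [hl _ hk]
        exact D.R1_bot _ (hE _)
      · rw [Function.update_of_ne hk2]
        exact h4 _ _ hk
  · dsimp only
    rcases eq_or_ne k i with rfl | hk2
    · rw [Function.update_self]
      exact D.R12_step _ (h1 _) _ hlt (h5 _ _)
    · rw [Function.update_of_ne hk2]
      exact h5 _ _

/-- The least tableau is the only one without lower covers. -/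
lemma eq_bot (T : {T : TabT a b // T ∈ D.tableaux a b}) (h : ∀ γ S, ¬ D.cov γ S T) :
    T.1 = D.bot a b := by
  have hs : ∀ i, T.1.2 i = D.N := by
    by_contra hcon
    push Not at hcon
    obtain ⟨i, hi, hl⟩ := exists_last _ hcon
    refine h _ ⟨_, D.update_mem' T.2 i hi fun i' hi' => not_not.mp (hl i' hi')⟩
      (Or.inr (Or.inr ⟨i, rfl, ?_, fun i' hi' => ?_, rfl⟩))
    · exact Function.update_self ..
    · exact Function.update_of_ne hi' ..
  refine Prod.ext ?_ (funext hs)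
  by_contra hcon
  obtain ⟨j, hj, hl⟩ := exists_last _ (Function.ne_iff.mp hcon)
  have hl' : ∀ j', j < j' → T.1.1 j' = (D.N - 1, D.N) := fun j' hj' => not_not.mp (hl j' hj')
  rcases D.C_step _ (T.2.1 j) hj with ⟨hc, hR⟩ | ⟨hc, hR⟩
  · refine h _ ⟨_, D.update_mem T.2 hs j hl' _ hc hR⟩
      (Or.inr (Or.inl ⟨j, rfl, ?_, fun j' hj' => ?_, rfl⟩))
    · exact Function.update_self ..
    · exact Function.update_of_ne hj' ..
  · refine h _ ⟨_, D.update_mem T.2 hs j hl' _ hc hR⟩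
      (Or.inl ⟨j, rfl, ?_, fun j' hj' => ?_, rfl⟩)
    · exact Function.update_self ..
    · exact Function.update_of_ne hj' ..

/-- The filling with columns `(1,2)` and `(1)`, except that the last length-two column is `(1,k)`
and the last length-one column is `(e)`. -/
def nearTop (a b k e : ℕ) : TabT a b :=
  (fun j => if (j : ℕ) + 1 = b then (1, k) else (1, 2),
   fun i => if (i : ℕ) + 1 = a then e else 1)

lemma nearTop_mem {k e : ℕ} (hk : k ∈ Finset.Icc 2 3) (he : e ∈ Finset.Icc 1 3) :
    nearTop a b k e ∈ D.tableaux a b := by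
  have hN := D.three_le
  have h2 : 2 ∈ Finset.Icc 2 3 := by decide
  have h1 : 1 ∈ Finset.Icc 1 3 := by decide
  refine ⟨fun j => ?_, fun i => ?_, fun j j' hj => ?_, fun i i' hi => ?_, fun j i => ?_⟩
  · dsimp only [nearTop]
    split_ifs
    exacts [D.C_top _ hk, D.C_top _ h2]
  · simp only [nearTop, Finset.mem_Icc] at he ⊢
    split_ifs <;> omega
  · dsimp only [nearTop]
    rw [if_neg (by omega : ¬ (j : ℕ) + 1 = b)]
    split_ifs
    exacts [D.R2_top _ hk, D.R2_top _ h2]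
  · dsimp only [nearTop]
    rw [if_neg (by omega : ¬ (i : ℕ) + 1 = a)]
    split_ifs
    exacts [D.R1_top _ he, D.R1_top _ h1]
  · dsimp only [nearTop]
    split_ifs
    exacts [D.R12_top _ hk _ he, D.R12_top _ hk _ h1, D.R12_top _ h2 _ he, D.R12_top _ h2 _ h1]

/-- An upper cover of the least element of color `σ α` has at most one upper cover of color
`σ β`: the one obtained by changing the first column into `(N-2,N)`. -/
lemma upper_unique (hb : 0 < b) {m y w : {T : TabT a b // T ∈ D.tableaux a b}}
    (hm : m.1 = D.bot a b) (hy : D.cov (D.σ TwoColor.alpha) m y)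
    (hw : D.cov (D.σ TwoColor.beta) y w) :
    w.1 = (fun j : Fin b => if (j : ℕ) = 0 then (D.N - 2, D.N) else (D.N - 1, D.N), y.1.2) := by
  have hN := D.three_le
  have hσ : D.σ TwoColor.alpha ≠ D.σ TwoColor.beta := fun h => by
    have := congrArg D.σ h
    rw [D.σσ, D.σσ] at this
    cases this
  have c1 : D.col (D.N - 1) = D.σ TwoColor.alpha := by
    rw [D.col_dual 1 (Finset.mem_Icc.mpr (by omega)), D.col_one]
  have c2 : D.col (D.N - 2) = D.σ TwoColor.beta := by
    rw [D.col_dual 2 (Finset.mem_Icc.mpr (by omega)), D.col_two]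
  have hm1 : ∀ j, m.1.1 j = (D.N - 1, D.N) := fun j => by rw [hm]; rfl
  have hm2 : ∀ i, m.1.2 i = D.N := fun i => by rw [hm]; rfl
  have hycol : (∀ j, y.1.1 j = (D.N - 1, D.N)) ∧ ∀ i, y.1.2 i = D.N ∨ y.1.2 i = D.N - 1 := by
    rcases hy with ⟨j, hγ, hS, hne, hs⟩ | ⟨j, hγ, hS, hne, hs⟩ | ⟨i, hγ, hS, hne, hs⟩
    · rw [hm1, Prod.mk.injEq] at hS
      rw [show (y.1.1 j).1 = D.N - 2 by omega, c2] at hγ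
      exact absurd hγ.symm hσ
    · have := D.C_bd _ (y.2.1 j)
      rw [hm1, Prod.mk.injEq] at hS
      omega
    · refine ⟨fun j => by rw [← hs, hm1], fun i' => ?_⟩
      rcases eq_or_ne i' i with rfl | hi'
      · rw [hm2] at hS
        omega
      · rw [← hne i' hi', hm2]
        exact Or.inl rfl
  obtain ⟨hy1, hy2⟩ := hycol
  rcases hw with ⟨j, hγ, hS, hne, hs⟩ | ⟨j, hγ, hS, hne, hs⟩ | ⟨i, hγ, hS, hne, hs⟩
  · rw [hy1, Prod.mk.injEq] at hS
    have hj0 : (j : ℕ) = 0 := by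
      by_contra h0
      have hlt : (⟨0, hb⟩ : Fin b) < j := Fin.lt_def.mpr (Nat.pos_of_ne_zero h0)
      have := D.R2_le _ (w.2.1 _) _ (w.2.1 _) (w.2.2.2.1 _ _ hlt)
      rw [← hne _ hlt.ne, hy1] at this
      dsimp only at this
      omega
    refine Prod.ext (funext fun j' => ?_) hs.symm
    dsimp only
    split_ifs with h0
    · obtain rfl : j' = j := Fin.ext (by omega)
      exact Prod.ext (by dsimp only; omega) hS.2.symm
    · rw [← hne j' (fun e => h0 (by rw [e, hj0])), hy1]
  · have := D.C_bd _ (w.2.1 j)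
    rw [hy1, Prod.mk.injEq] at hS
    omega
  · exfalso
    rcases hy2 i with h | h
    · rw [h] at hS
      rw [show w.1.2 i = D.N - 1 by omega, c1] at hγ
      exact hσ hγ
    · have := D.R12_le _ (w.2.1 ⟨0, hb⟩) _ (w.2.2.1 i) (w.2.2.2.2.2 _ _)
      rw [← hs, hy1] at this
      dsimp only at this
      omega

lemma not_dual (ha : 0 < a) (hb : 0 < b)
    (φ : {T : TabT a b // T ∈ D.tableaux a b} → {T : TabT a b // T ∈ D.tableaux a b})
    (hφ : Function.Bijective φ)
    (h : ∀ γ S T, D.cov γ S T ↔ D.cov (D.σ γ) (φ T) (φ S)) : False := by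
  have e2 : 2 ∈ Finset.Icc 2 3 := by decide
  have e3 : 3 ∈ Finset.Icc 2 3 := by decide
  have f1 : 1 ∈ Finset.Icc 1 3 := by decide
  have f2 : 2 ∈ Finset.Icc 1 3 := by decide
  have f3 : 3 ∈ Finset.Icc 1 3 := by decide
  let M : {T : TabT a b // T ∈ D.tableaux a b} := ⟨_, D.nearTop_mem e2 f1⟩
  let x : {T : TabT a b // T ∈ D.tableaux a b} := ⟨_, D.nearTop_mem e2 f2⟩
  let z₁ : {T : TabT a b // T ∈ D.tableaux a b} := ⟨_, D.nearTop_mem e2 f3⟩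
  let z₂ : {T : TabT a b // T ∈ D.tableaux a b} := ⟨_, D.nearTop_mem e3 f2⟩
  have hM : ∀ γ T, ¬ D.cov γ M T := by
    intro γ T hc
    rcases hc with ⟨j, hγ, hS, hne, hs⟩ | ⟨j, hγ, hS, hne, hs⟩ | ⟨i, hγ, hS, hne, hs⟩
    · have := D.C_bd _ (T.2.1 j)
      simp only [M, nearTop, ite_self, Prod.mk.injEq] at hS
      omega
    · have := D.C_bd _ (T.2.1 j)
      simp only [M, nearTop, ite_self, Prod.mk.injEq] at hS
      omega
    · have := Finset.mem_Icc.mp (T.2.2.1 i)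
      simp only [M, nearTop, ite_self] at hS
      omega
  have hbot : (φ M).1 = D.bot a b := by
    refine D.eq_bot _ fun γ S hc => ?_
    obtain ⟨T, rfl⟩ := hφ.2 S
    refine hM (D.σ γ) T ((h _ _ _).mpr ?_)
    rwa [D.σσ]
  have hlast : ∀ i : Fin a, i ≠ ⟨a - 1, by omega⟩ → ¬ (i : ℕ) + 1 = a := fun i hi h' =>
    hi (Fin.ext (by dsimp only; omega))
  have hlast' : ∀ i : Fin b, i ≠ ⟨b - 1, by omega⟩ → ¬ (i : ℕ) + 1 = b := fun i hi h' =>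
    hi (Fin.ext (by dsimp only; omega))
  have hx : D.cov TwoColor.alpha x M := by
    refine Or.inr (Or.inr ⟨⟨a - 1, by omega⟩, ?_, ?_, fun i hi => ?_, rfl⟩)
    · simpa [M, nearTop] using D.col_one
    · simp [M, x, nearTop, Nat.sub_add_cancel ha]
    · simp [M, x, nearTop, hlast i hi]
  have hz₁ : D.cov TwoColor.beta z₁ x := by
    refine Or.inr (Or.inr ⟨⟨a - 1, by omega⟩, ?_, ?_, fun i hi => ?_, rfl⟩)
    · simpa [x, nearTop, Nat.sub_add_cancel ha] using D.col_two
    · simp [z₁, x, nearTop, Nat.sub_add_cancel ha]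
    · simp [z₁, x, nearTop, hlast i hi]
  have hz₂ : D.cov TwoColor.beta z₂ x := by
    refine Or.inr (Or.inl ⟨⟨b - 1, by omega⟩, ?_, ?_, fun i hi => ?_, rfl⟩)
    · simpa [x, nearTop] using D.col_two
    · simp [z₂, x, nearTop, Nat.sub_add_cancel hb]
    · simp [z₂, x, nearTop, hlast' i hi]
  have hy := (h _ _ _).mp hx
  have hw : φ z₁ = φ z₂ := Subtype.ext <|
    (D.upper_unique hb hbot hy ((h _ _ _).mp hz₁)).trans
      (D.upper_unique hb hbot hy ((h _ _ _).mp hz₂)).symm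
  have heq := congrArg (fun T : {T : TabT a b // T ∈ D.tableaux a b} => T.1.2 ⟨a - 1, by omega⟩)
    (hφ.1 hw)
  simp [z₁, z₂, nearTop, Nat.sub_add_cancel ha] at heq

theorem dual_iff (a b : ℕ) :
    (∃ φ : {T : TabT a b // T ∈ D.tableaux a b} → {T : TabT a b // T ∈ D.tableaux a b},
      Function.Bijective φ ∧ ∀ γ S T, D.cov γ S T ↔ D.cov (D.σ γ) (φ T) (φ S)) ↔
      (a = 0 ∨ b = 0) := by
  refine ⟨?_, D.exists_dual⟩
  rintro ⟨φ, hφ, h⟩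
  by_contra hab
  exact D.not_dual (by omega) (by omega) φ hφ h

end TabSystem

/-! ### The three instances -/

/-- The interchange of the two colors. -/
def swapColor : TwoColor → TwoColor
  | TwoColor.alpha => TwoColor.beta
  | TwoColor.beta => TwoColor.alpha

set_option synthInstance.maxSize 1000 in
instance (c c' : ℕ × ℕ) : Decidable (g2pair2 c c') := by
  unfold g2pair2
  infer_instance

instance (c : ℕ × ℕ) (e : ℕ) : Decidable (g2pair1 c e) := by
  unfold g2pair1
  infer_instance

/-- The system of `A2`-semistandard tableaux. -/
def sysA2 : TabSystem where
  N := 3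
  col := colEntA2
  σ := swapColor
  C := {(1, 2), (1, 3), (2, 3)}
  R2 c c' := c.1 ≤ c'.1 ∧ c.2 ≤ c'.2
  R12 c e := c.1 ≤ e
  R1 e e' := e ≤ e'
  σσ := by rintro (_ | _) <;> rfl
  three_le := by decide +kernel
  col_one := by decide +kernel
  col_two := by decide +kernel
  col_dual := by decide +kernel
  C_bd := by decide +kernel
  C_dual := by decide +kernel
  R2_dual := by decide +kernel
  R1_dual := by decide +kernel
  R2_le := by decide +kernel
  R12_le := by decide +kernel
  C_top := by decide +kernel
  R2_top := by decide +kernel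
  R12_top := by decide +kernel
  R1_top := by decide +kernel
  C_bot := by decide +kernel
  R2_bot := by decide +kernel
  R12_bot := by decide +kernel
  R1_bot := by decide +kernel
  R12_step := by decide +kernel
  R1_step := by decide +kernel
  C_step := by decide +kernel

/-- The system of `C2`-semistandard tableaux. -/
def sysC2 : TabSystem where
  N := 4
  col := colEntC2
  σ := id
  C := {(1, 2), (1, 3), (2, 3), (2, 4), (3, 4)}
  R2 c c' := c.1 ≤ c'.1 ∧ c.2 ≤ c'.2 ∧ ¬ (c = (2, 3) ∧ c' = (2, 3))
  R12 c e := c.1 ≤ e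
  R1 e e' := e ≤ e'
  σσ := fun _ => rfl
  three_le := by decide +kernel
  col_one := by decide +kernel
  col_two := by decide +kernel
  col_dual := by decide +kernel
  C_bd := by decide +kernel
  C_dual := by decide +kernel
  R2_dual := by decide +kernel
  R1_dual := by decide +kernel
  R2_le := by decide +kernel
  R12_le := by decide +kernel
  C_top := by decide +kernel
  R2_top := by decide +kernel
  R12_top := by decide +kernel
  R1_top := by decide +kernel
  C_bot := by decide +kernel
  R2_bot := by decide +kernel
  R12_bot := by decide +kernel
  R1_bot := by decide +kernel
  R12_step := by decide +kernel
  R1_step := by decide +kernel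
  C_step := by decide +kernel

/-- The system of `G2`-semistandard tableaux. -/
def sysG2 : TabSystem where
  N := 7
  col := colEntG2
  σ := id
  C := {(1, 2), (1, 3), (1, 4), (1, 5), (1, 6), (1, 7), (2, 5), (2, 6), (2, 7), (3, 6), (3, 7),
    (4, 7), (5, 7), (6, 7)}
  R2 c c' := (c.1 ≤ c'.1 ∧ c.2 ≤ c'.2) ∧ g2pair2 c c'
  R12 c e := c.1 ≤ e ∧ g2pair1 c e
  R1 e e' := e ≤ e' ∧ ¬ (e = 4 ∧ e' = 4)
  σσ := fun _ => rfl
  three_le := by decide +kernel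
  col_one := by decide +kernel
  col_two := by decide +kernel
  col_dual := by decide +kernel
  C_bd := by decide +kernel
  C_dual := by decide +kernel
  R2_dual := by decide +kernel
  R1_dual := by decide +kernel
  R2_le := by decide +kernel
  R12_le := by decide +kernel
  C_top := by decide +kernel
  R2_top := by decide +kernel
  R12_top := by decide +kernel
  R1_top := by decide +kernel
  C_bot := by decide +kernel
  R2_bot := by decide +kernel
  R12_bot := by decide +kernel
  R1_bot := by decide +kernel
  R12_step := by decide +kernel
  R1_step := by decide +kernel
  C_step := by decide +kernel

lemma SA2_eq (a b : ℕ) : SA2 a b = sysA2.tableaux a b := by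
  have hC : ∀ c : ℕ × ℕ, (1 ≤ c.1 ∧ c.1 ≤ 3 ∧ 1 ≤ c.2 ∧ c.2 ≤ 3 ∧ c.1 < c.2) ↔ c ∈ sysA2.C := by
    rintro ⟨x, y⟩
    simp only [sysA2, Finset.mem_insert, Finset.mem_singleton, Prod.mk.injEq]
    omega
  ext T
  constructor
  · rintro ⟨h1, h2, h3, h4, h5⟩
    exact ⟨fun j => (hC _).mp (h1 j), fun i => Finset.mem_Icc.mpr (h2 i),
      fun j j' h => h3 _ _ h.le, fun i i' h => h4 _ _ h.le, h5⟩
  · rintro ⟨h1, h2, h3, h4, h5⟩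
    refine ⟨fun j => (hC _).mpr (h1 j), fun i => Finset.mem_Icc.mp (h2 i), fun j j' h => ?_,
      fun i i' h => ?_, h5⟩
    · rcases h.eq_or_lt with rfl | h
      exacts [⟨le_rfl, le_rfl⟩, h3 _ _ h]
    · rcases h.eq_or_lt with rfl | h
      exacts [le_rfl, h4 _ _ h]

lemma SC2_eq (a b : ℕ) : SC2 a b = sysC2.tableaux a b := by
  have hC : ∀ c : ℕ × ℕ, ((1 ≤ c.1 ∧ c.1 ≤ 4 ∧ 1 ≤ c.2 ∧ c.2 ≤ 4 ∧ c.1 < c.2) ∧ c ≠ (1, 4)) ↔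
      c ∈ sysC2.C := by
    rintro ⟨x, y⟩
    simp only [sysC2, Finset.mem_insert, Finset.mem_singleton, Prod.mk.injEq, ne_eq]
    omega
  ext T
  constructor
  · rintro ⟨h1, h2, h3, h4, h5, h6, h7⟩
    exact ⟨fun j => (hC _).mp ⟨h1 j, h6 j⟩, fun i => Finset.mem_Icc.mpr (h2 i),
      fun j j' h => ⟨(h3 _ _ h.le).1, (h3 _ _ h.le).2, fun e => h.ne (h7 _ _ e.1 e.2)⟩,
      fun i i' h => h4 _ _ h.le, h5⟩
  · rintro ⟨h1, h2, h3, h4, h5⟩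
    refine ⟨fun j => ((hC _).mpr (h1 j)).1, fun i => Finset.mem_Icc.mp (h2 i), fun j j' h => ?_,
      fun i i' h => ?_, h5, fun j => ((hC _).mpr (h1 j)).2, fun j j' h h' => ?_⟩
    · rcases h.eq_or_lt with rfl | h
      exacts [⟨le_rfl, le_rfl⟩, ⟨(h3 _ _ h).1, (h3 _ _ h).2.1⟩]
    · rcases h.eq_or_lt with rfl | h
      exacts [le_rfl, h4 _ _ h]
    · rcases lt_trichotomy j j' with hj | hj | hj
      exacts [absurd ⟨h, h'⟩ (h3 _ _ hj).2.2, hj, absurd ⟨h', h⟩ (h3 _ _ hj).2.2]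

/-- A relation that holds between adjacent terms of a sequence and is transitive on its values
holds between any two of its terms. -/
lemma rel_of_adjacent {α : Type*} {n : ℕ} (r : α → α → Prop) (C : Finset α) (f : Fin n → α)
    (hf : ∀ j, f j ∈ C) (htr : ∀ x ∈ C, ∀ y ∈ C, ∀ z ∈ C, r x y → r y z → r x z)
    (h : ∀ j j' : Fin n, (j' : ℕ) = j + 1 → r (f j) (f j')) :
    ∀ j j', j < j' → r (f j) (f j') := by
  suffices H : ∀ (k : ℕ) (j j' : Fin n), (j' : ℕ) = j + 1 + k → r (f j) (f j') from
    fun j j' hj => H (j' - j - 1) j j' (by omega)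
  intro k
  induction k with
  | zero => exact fun j j' hj => h j j' hj
  | succ k ih =>
    intro j j' hj
    have hlt : (j : ℕ) + 1 + k < n := by omega
    exact htr _ (hf _) _ (hf ⟨j + 1 + k, hlt⟩) _ (hf _) (ih _ _ rfl)
      (h _ _ (by dsimp only; omega))

lemma g2_R2_trans : ∀ x ∈ sysG2.C, ∀ y ∈ sysG2.C, ∀ z ∈ sysG2.C,
    ((x.1 ≤ y.1 ∧ x.2 ≤ y.2) ∧ g2pair2 x y) → ((y.1 ≤ z.1 ∧ y.2 ≤ z.2) ∧ g2pair2 y z) →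
      ((x.1 ≤ z.1 ∧ x.2 ≤ z.2) ∧ g2pair2 x z) := by
  decide +kernel

/-- The restriction on a length-two and a length-one column passes to columns further left and
entries further right. -/
lemma g2_R12_trans : ∀ x ∈ sysG2.C, ∀ y ∈ sysG2.C, ∀ e ∈ Finset.Icc 1 7, ∀ e' ∈ Finset.Icc 1 7,
    (x.1 ≤ y.1 ∧ x.2 ≤ y.2) → y.1 ≤ e → e ≤ e' → g2pair1 y e → g2pair1 x e' := by
  decide +kernel

lemma g2_C (c : ℕ × ℕ) : ((1 ≤ c.1 ∧ c.1 ≤ 7 ∧ 1 ≤ c.2 ∧ c.2 ≤ 7 ∧ c.1 < c.2) ∧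
    (c ≠ (2, 3) ∧ c ≠ (2, 4) ∧ c ≠ (3, 4) ∧ c ≠ (3, 5) ∧ c ≠ (4, 5) ∧ c ≠ (4, 6) ∧ c ≠ (5, 6))) ↔
      c ∈ sysG2.C := by
  have hto : ∀ x ∈ Finset.Icc 1 7, ∀ y ∈ Finset.Icc 1 7, x < y ∧
      ((x, y) ≠ (2, 3) ∧ (x, y) ≠ (2, 4) ∧ (x, y) ≠ (3, 4) ∧ (x, y) ≠ (3, 5) ∧ (x, y) ≠ (4, 5) ∧
        (x, y) ≠ (4, 6) ∧ (x, y) ≠ (5, 6)) → (x, y) ∈ sysG2.C := by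
    decide +kernel
  have hof : ∀ c ∈ sysG2.C, (1 ≤ c.1 ∧ c.1 ≤ 7 ∧ 1 ≤ c.2 ∧ c.2 ≤ 7 ∧ c.1 < c.2) ∧
      (c ≠ (2, 3) ∧ c ≠ (2, 4) ∧ c ≠ (3, 4) ∧ c ≠ (3, 5) ∧ c ≠ (4, 5) ∧ c ≠ (4, 6) ∧
        c ≠ (5, 6)) := by
    decide +kernel
  refine ⟨fun ⟨⟨h1, h2, h3, h4, h5⟩, h⟩ => ?_, hof c⟩
  exact hto c.1 (Finset.mem_Icc.mpr ⟨h1, h2⟩) c.2 (Finset.mem_Icc.mpr ⟨h3, h4⟩) ⟨h5, h⟩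

/-- For `G2`, the conditions on adjacent columns imply those on all pairs of columns. -/
lemma SG2_eq (a b : ℕ) : SG2 a b = sysG2.tableaux a b := by
  ext T
  constructor
  · rintro ⟨h1, h2, h3, h4, h5, h6, h7, h8, h9⟩
    have hC : ∀ j, T.1 j ∈ sysG2.C := fun j => (g2_C _).mp ⟨h1 j, h7 j⟩
    refine ⟨hC, fun i => Finset.mem_Icc.mpr (h2 i), ?_,
      fun i i' h => ⟨h4 _ _ h.le, fun e => h.ne (h6 _ _ e.1 e.2)⟩, fun j i => ⟨h5 j i, ?_⟩⟩
    · exact rel_of_adjacent _ _ _ hC g2_R2_trans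
        fun j j' hj => ⟨h3 _ _ (Fin.le_def.mpr (by omega)), h8 _ _ hj⟩
    · have hj := j.isLt
      have hi := i.isLt
      have hb : b - 1 < b := by omega
      have ha : 0 < a := by omega
      exact g2_R12_trans _ (hC _) _ (hC ⟨b - 1, hb⟩) _ (Finset.mem_Icc.mpr (h2 ⟨0, ha⟩)) _
        (Finset.mem_Icc.mpr (h2 _)) (h3 _ _ (Fin.le_def.mpr (by dsimp only; omega))) (h5 _ _)
        (h4 _ _ (Fin.le_def.mpr (Nat.zero_le _))) (h9 _ _ (by dsimp only; omega) rfl)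
  · rintro ⟨h1, h2, h3, h4, h5⟩
    refine ⟨fun j => ((g2_C _).mpr (h1 j)).1, fun i => Finset.mem_Icc.mp (h2 i), fun j j' h => ?_,
      fun i i' h => ?_, fun j i => (h5 j i).1, fun i i' h h' => ?_,
      fun j => ((g2_C _).mpr (h1 j)).2, fun j j' h => (h3 _ _ (Fin.lt_def.mpr (by omega))).2,
      fun j i _ _ => (h5 j i).2⟩
    · rcases h.eq_or_lt with rfl | h
      exacts [⟨le_rfl, le_rfl⟩, (h3 _ _ h).1]
    · rcases h.eq_or_lt with rfl | h
      exacts [le_rfl, (h4 _ _ h).1]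
    · rcases lt_trichotomy i i' with hj | hj | hj
      exacts [absurd ⟨h, h'⟩ (h4 _ _ hj).2, hj, absurd ⟨h', h⟩ (h4 _ _ hj).2]

/-- Self-duality of the `g`-semistandard lattices holds exactly when `a = 0` or `b = 0`:
for `g = C2` and `g = G2` there is a color-preserving order-reversing bijection of
`L_g(a,b)` iff `a = 0 ∨ b = 0`, and for `g = A2` there is a color-interchanging
order-reversing bijection of `L_A2(a,b)` iff `a = 0 ∨ b = 0`. -/
theorem semistandard_lattice_self_dual_iff (a b : ℕ) :
    ((∃ φ : {T : TabT a b // T ∈ SC2 a b} → {T : TabT a b // T ∈ SC2 a b},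
        Function.Bijective φ ∧
          ∀ (γ : TwoColor) (S T : {T : TabT a b // T ∈ SC2 a b}),
            covC2 a b γ S T ↔ covC2 a b γ (φ T) (φ S)) ↔ (a = 0 ∨ b = 0)) ∧
    ((∃ φ : {T : TabT a b // T ∈ SG2 a b} → {T : TabT a b // T ∈ SG2 a b},
        Function.Bijective φ ∧
          ∀ (γ : TwoColor) (S T : {T : TabT a b // T ∈ SG2 a b}),
            covG2 a b γ S T ↔ covG2 a b γ (φ T) (φ S)) ↔ (a = 0 ∨ b = 0)) ∧
    ((∃ φ : {T : TabT a b // T ∈ SA2 a b} → {T : TabT a b // T ∈ SA2 a b},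
        Function.Bijective φ ∧
          ∀ S T : {T : TabT a b // T ∈ SA2 a b},
            (covA2 a b TwoColor.alpha S T ↔ covA2 a b TwoColor.beta (φ T) (φ S)) ∧
            (covA2 a b TwoColor.beta S T ↔ covA2 a b TwoColor.alpha (φ T) (φ S))) ↔
      (a = 0 ∨ b = 0)) := by
  refine ⟨?_, ?_, ?_⟩
  · simp only [covC2]
    rw [SC2_eq]
    exact sysC2.dual_iff a b
  · simp only [covG2]
    rw [SG2_eq]
    exact sysG2.dual_iff a b
  · simp only [covA2]
    rw [SA2_eq, ← sysA2.dual_iff a b]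
    refine exists_congr fun φ => and_congr_right fun _ => ⟨fun h γ S T => ?_, fun h S T => ?_⟩
    · cases γ
      exacts [(h S T).1, (h S T).2]
    · exact ⟨h TwoColor.alpha S T, h TwoColor.beta S T⟩
end

section
/- Let a, b ≥ 0 be integers. (i) For every T in the edge-colored lattice L_A2(a,b), wt(T) = (n_1(T) − n_2(T), n_2(T) − n_3(T)). (ii) For every T in the edge-colored lattice L_C2(a,b), wt(T) = (n_1(T) − n_2(T) + n_3(T) − n_4(T), n_2(T) − n_3(T)). (iii) For every T in the edge-colored lattice L_G2(a,b), wt(T) = (n_1(T) − n_2(T) + 2 n_3(T) − 2 n_5(T) + n_6(T) − n_7(T), n_2(T) − n_3(T) + n_5(T) − n_6(T)). Here wt is computed from the edge-colored covering structure of the respective lattice. -/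
/-! ### Chain lengths from a potential function -/

/-- If `f` increases by one along each edge and only elements with `f = 0` have no edge ending at
them, then `ρ = f`. -/
lemma rhoOf_eq {V : Type*} (r : V → V → Prop) (f : V → ℕ)
    (h1 : ∀ s t, r s t → f t = f s + 1) (h2 : ∀ t, 0 < f t → ∃ s, r s t) (t : V) :
    rhoOf r t = f t := by
  have key : ∀ n t, f t = n → ∃ c : ℕ → V, c n = t ∧ ∀ i, i < n → r (c i) (c (i + 1)) := by
    intro n
    induction n with
    | zero => exact fun t _ => ⟨fun _ => t, rfl, fun i hi => by omega⟩
    | succ n ih =>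
      intro t ht
      obtain ⟨s, hs⟩ := h2 t (by omega)
      obtain ⟨c, hc, hr⟩ := ih s (by have := h1 s t hs; omega)
      refine ⟨fun i => if i ≤ n then c i else t, by simp, fun i hi => ?_⟩
      rcases Nat.lt_succ_iff_lt_or_eq.1 hi with h | rfl
      · simpa [h.le, Nat.succ_le_of_lt h] using hr i h
      · simpa [hc] using hs
  apply IsGreatest.csSup_eq
  refine ⟨key _ t rfl, ?_⟩
  rintro n ⟨c, rfl, hr⟩
  have : ∀ i, i ≤ n → i ≤ f (c i) := by
    intro i
    induction i with
    | zero => simp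
    | succ i ih =>
      intro hi
      have := ih (by omega)
      have := h1 _ _ (hr i hi)
      omega
  exact this n le_rfl

lemma deltaOf_eq {V : Type*} (r : V → V → Prop) (f : V → ℕ)
    (h1 : ∀ s t, r s t → f s = f t + 1) (h2 : ∀ s, 0 < f s → ∃ t, r s t) (t : V) :
    deltaOf r t = f t := by
  -- Reversing a chain turns `δ` for `r` into `ρ` for the opposite relation.
  rw [← rhoOf_eq (fun s t => r t s) f (fun s t h => h1 t s h) h2 t]
  unfold deltaOf rhoOf
  congr 1
  ext n
  constructor
  · rintro ⟨c, hc, hr⟩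
    refine ⟨fun i => c (n - i), by simpa using hc, fun i hi => ?_⟩
    have := hr (n - (i + 1)) (by omega)
    rwa [show n - (i + 1) + 1 = n - i by omega] at this
  · rintro ⟨c, hc, hr⟩
    refine ⟨fun i => c (n - i), by simpa using hc, fun i hi => ?_⟩
    have := hr (n - (i + 1)) (by omega)
    rwa [show n - (i + 1) + 1 = n - i by omega] at this

/-! ### Tableaux as words of columns -/

/-- The columns of a tableau, read from left to right starting at index `1`. A length-one column
with entry `e` is encoded as `(e, 8)`; the index `0` carries the padding `(0, 0)`, and the indices
beyond the last column carry `(9, 9)`. With this encoding, semistandardness along rows is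
monotonicity of the word. -/
def word {a b : ℕ} (T : TabT a b) : ℕ → ℕ × ℕ
  | 0 => (0, 0)
  | k + 1 => if h : k < b then T.1 ⟨k, h⟩ else if h : k - b < a then (T.2 ⟨k - b, h⟩, 8) else (9, 9)

lemma word_double {a b : ℕ} (T : TabT a b) (j : Fin b) : word T (j + 1) = T.1 j := by
  simp [word]

lemma word_single {a b : ℕ} (T : TabT a b) (i : Fin a) : word T (b + i + 1) = (T.2 i, 8) := by
  simp [word]

lemma word_cases {a b : ℕ} (T : TabT a b) (k : ℕ) :
    (k = 0 ∧ word T k = (0, 0)) ∨ (∃ j : Fin b, k = j + 1 ∧ word T k = T.1 j) ∨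
    (∃ i : Fin a, k = b + i + 1 ∧ word T k = (T.2 i, 8)) ∨ (a + b < k ∧ word T k = (9, 9)) := by
  rcases k with _ | k
  · exact Or.inl ⟨rfl, rfl⟩
  · right
    by_cases h : k < b
    · exact Or.inl ⟨⟨k, h⟩, rfl, by simp [word, h]⟩
    · by_cases hlt : k - b < a
      · exact Or.inr (Or.inl ⟨⟨k - b, hlt⟩, by simp; omega, by simp [word, h, hlt]⟩)
      · exact Or.inr (Or.inr ⟨by omega, by simp [word, h, hlt]⟩)

/-- The letter `c` may be followed directly by `d`. -/
def Compat (forb : ℕ × ℕ → ℕ × ℕ → Prop) (c d : ℕ × ℕ) : Prop :=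
  c.1 ≤ d.1 ∧ c.2 ≤ d.2 ∧ ¬ forb c d

instance (forb : ℕ × ℕ → ℕ × ℕ → Prop) [DecidableRel forb] : DecidableRel (Compat forb) :=
  fun c d => inferInstanceAs (Decidable (c.1 ≤ d.1 ∧ c.2 ≤ d.2 ∧ ¬ forb c d))

/-- Each column of `T` is a letter of the alphabet `cols`. -/
def ColsIn {a b : ℕ} (cols : List (ℕ × ℕ)) (T : TabT a b) : Prop :=
  (∀ j, T.1 j ∈ cols ∧ (T.1 j).2 ≠ 8) ∧ ∀ i, (T.2 i, 8) ∈ cols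

/-- Semistandardness described by conditions on letters and on pairs of consecutive letters. -/
def IsLocal {a b : ℕ} (cols : List (ℕ × ℕ)) (forb : ℕ × ℕ → ℕ × ℕ → Prop) (T : TabT a b) : Prop :=
  ColsIn cols T ∧ ∀ k, Compat forb (word T k) (word T (k + 1))

lemma word_mem {a b : ℕ} {cols : List (ℕ × ℕ)} {T : TabT a b} (h : ColsIn cols T) (k : ℕ) :
    word T k ∈ (0, 0) :: (9, 9) :: cols := by
  rcases word_cases T k with ⟨-, e⟩ | ⟨j, -, e⟩ | ⟨i, -, e⟩ | ⟨-, e⟩ <;> rw [e]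
  · simp
  · simp [(h.1 j).1]
  · simp [h.2 i]
  · simp

lemma isLocal_iff {a b : ℕ} (cols : List (ℕ × ℕ)) (forb : ℕ × ℕ → ℕ × ℕ → Prop) (T : TabT a b) :
    IsLocal cols forb T ↔ ColsIn cols T ∧ Monotone (word T) ∧
      ∀ k, ¬ forb (word T k) (word T (k + 1)) := by
  constructor
  · rintro ⟨h, h'⟩
    exact ⟨h, monotone_nat_of_le_succ fun k => ⟨(h' k).1, (h' k).2.1⟩, fun k => (h' k).2.2⟩
  · rintro ⟨h, h1, h2⟩
    exact ⟨h, fun k => ⟨(h1 k.le_succ).1, (h1 k.le_succ).2, h2 k⟩⟩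

/-- The row conditions on a tableau amount to monotonicity of its word. -/
lemma monotone_word_iff {a b : ℕ} (T : TabT a b)
    (h1 : ∀ j, (T.1 j).1 ≤ 7 ∧ (T.1 j).2 ≤ 7) (h2 : ∀ i, T.2 i ≤ 7) :
    Monotone (word T) ↔
      (∀ j j' : Fin b, j ≤ j' → (T.1 j).1 ≤ (T.1 j').1 ∧ (T.1 j).2 ≤ (T.1 j').2) ∧
      (∀ i i' : Fin a, i ≤ i' → T.2 i ≤ T.2 i') ∧
      (∀ (j : Fin b) (i : Fin a), (T.1 j).1 ≤ T.2 i) := by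
  constructor
  · intro h
    refine ⟨fun j j' hj => ?_, fun i i' hi => ?_, fun j i => ?_⟩
    · have := h (show (j : ℕ) + 1 ≤ j' + 1 by simpa using hj)
      rwa [word_double, word_double] at this
    · have := h (show b + (i : ℕ) + 1 ≤ b + i' + 1 by simpa using hi)
      rw [word_single, word_single] at this
      exact this.1
    · have := h (show (j : ℕ) + 1 ≤ b + i + 1 by omega)
      rw [word_double, word_single] at this
      exact this.1
  · rintro ⟨m1, m2, m3⟩ k k' hk
    rcases word_cases T k with ⟨p, e⟩ | ⟨j, p, e⟩ | ⟨i, p, e⟩ | ⟨p, e⟩ <;>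
    rcases word_cases T k' with ⟨p', e'⟩ | ⟨j', p', e'⟩ | ⟨i', p', e'⟩ | ⟨p', e'⟩ <;>
    rw [e, e'] <;> try omega
    all_goals first
      | exact ⟨Nat.zero_le _, Nat.zero_le _⟩
      | exact le_rfl
      | exact m1 j j' (Fin.le_def.2 (by omega))
      | exact ⟨m3 j i', by have := h1 j; dsimp only; omega⟩
      | exact ⟨by have := h1 j; dsimp only; omega, by have := h1 j; dsimp only; omega⟩
      | exact ⟨m2 i i' (Fin.le_def.2 (by omega)), le_rfl⟩
      | exact ⟨by have := h2 i; dsimp only; omega, by dsimp only; omega⟩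

/-! ### The three alphabets -/

/-- The `A2`-columns. -/
def colsA2 : List (ℕ × ℕ) := [(1, 2), (1, 3), (2, 3), (1, 8), (2, 8), (3, 8)]

/-- The `C2`-columns. -/
def colsC2 : List (ℕ × ℕ) :=
  [(1, 2), (1, 3), (2, 3), (2, 4), (3, 4), (1, 8), (2, 8), (3, 8), (4, 8)]

/-- The `G2`-columns. -/
def colsG2 : List (ℕ × ℕ) :=
  [(1, 2), (1, 3), (1, 4), (1, 5), (1, 6), (1, 7), (2, 5), (2, 6), (2, 7), (3, 6), (3, 7), (4, 7),
    (5, 7), (6, 7), (1, 8), (2, 8), (3, 8), (4, 8), (5, 8), (6, 8), (7, 8)]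

/-- No pair of consecutive columns is forbidden beyond monotonicity in type `A2`. -/
def forbA2 (_ _ : ℕ × ℕ) : Prop := False

/-- In type `C2` the column `(2, 3)` may not be repeated. -/
def forbC2 (c d : ℕ × ℕ) : Prop := c = (2, 3) ∧ d = (2, 3)

/-- The forbidden pairs of consecutive columns in type `G2`. -/
def forbG2 (c d : ℕ × ℕ) : Prop :=
  (c = (4, 8) ∧ d = (4, 8)) ∨ (d.2 ≠ 8 ∧ ¬ g2pair2 c d) ∨ (d.2 = 8 ∧ ¬ g2pair1 c d.1)

instance : DecidableRel forbA2 := fun _ _ => inferInstanceAs (Decidable False)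

instance : DecidableRel forbC2 := fun c d =>
  inferInstanceAs (Decidable (c = (2, 3) ∧ d = (2, 3)))

set_option synthInstance.maxSize 1000 in
set_option synthInstance.maxHeartbeats 200000 in
instance (c d : ℕ × ℕ) : Decidable (g2pair2 c d) := by unfold g2pair2; infer_instance

instance inst_s10 (c : ℕ × ℕ) (e : ℕ) : Decidable (g2pair1 c e) := by unfold g2pair1; infer_instance

instance : DecidableRel forbG2 := fun c d => by unfold forbG2; infer_instance

lemma SA2_iff {a b : ℕ} (T : TabT a b) : T ∈ SA2 a b ↔ IsLocal colsA2 forbA2 T := by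
  have hc : ColsIn colsA2 T ↔ (∀ j : Fin b, 1 ≤ (T.1 j).1 ∧ (T.1 j).1 ≤ 3 ∧ 1 ≤ (T.1 j).2 ∧
      (T.1 j).2 ≤ 3 ∧ (T.1 j).1 < (T.1 j).2) ∧ (∀ i : Fin a, 1 ≤ T.2 i ∧ T.2 i ≤ 3) := by
    refine and_congr (forall_congr' fun j => ?_) (forall_congr' fun i => ?_)
    · generalize T.1 j = c
      rcases c with ⟨p, q⟩
      simp [colsA2]
      omega
    · simp [colsA2]
      omega
  rw [isLocal_iff]
  constructor
  · rintro ⟨h1, h2, h3⟩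
    exact ⟨hc.2 ⟨h1, h2⟩, (monotone_word_iff T (fun j => by have := h1 j; omega)
      (fun i => by have := h2 i; omega)).2 h3, fun k => id⟩
  · rintro ⟨h, h3, -⟩
    obtain ⟨h1, h2⟩ := hc.1 h
    exact ⟨h1, h2, (monotone_word_iff T (fun j => by have := h1 j; omega)
      (fun i => by have := h2 i; omega)).1 h3⟩

/-- A letter occurring twice in a monotone word occurs twice consecutively. -/
lemma word_succ_eq {a b : ℕ} {T : TabT a b} (hm : Monotone (word T)) {k k' : ℕ} (h : k < k')
    {c : ℕ × ℕ} (hk : word T k = c) (hk' : word T k' = c) : word T (k + 1) = c :=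
  le_antisymm (hk' ▸ hm h) (hk ▸ hm k.le_succ)

lemma SC2_iff {a b : ℕ} (T : TabT a b) : T ∈ SC2 a b ↔ IsLocal colsC2 forbC2 T := by
  have hc : ColsIn colsC2 T ↔ ((∀ j : Fin b, 1 ≤ (T.1 j).1 ∧ (T.1 j).1 ≤ 4 ∧ 1 ≤ (T.1 j).2 ∧
      (T.1 j).2 ≤ 4 ∧ (T.1 j).1 < (T.1 j).2) ∧ (∀ j, T.1 j ≠ (1, 4))) ∧
      (∀ i : Fin a, 1 ≤ T.2 i ∧ T.2 i ≤ 4) := by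
    rw [← forall_and]
    refine and_congr (forall_congr' fun j => ?_) (forall_congr' fun i => ?_)
    · generalize T.1 j = c
      rcases c with ⟨p, q⟩
      simp [colsC2]
      omega
    · simp [colsC2]
      omega
  rw [isLocal_iff]
  constructor
  · rintro ⟨h1, h2, h3, h4, h5, h6, h7⟩
    refine ⟨hc.2 ⟨⟨h1, h6⟩, h2⟩, (monotone_word_iff T (fun j => by have := h1 j; omega)
      (fun i => by have := h2 i; omega)).2 ⟨h3, h4, h5⟩, ?_⟩
    rintro k ⟨e, e'⟩
    rcases word_cases T k with ⟨p, f⟩ | ⟨j, p, f⟩ | ⟨i, p, f⟩ | ⟨p, f⟩ <;>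
    rcases word_cases T (k + 1) with ⟨p', f'⟩ | ⟨j', p', f'⟩ | ⟨i', p', f'⟩ | ⟨p', f'⟩ <;>
    rw [f] at e <;> rw [f'] at e' <;> try simp at e e'
    have := h7 j j' e e'
    subst this
    omega
  · rintro ⟨h, h3, h4⟩
    obtain ⟨⟨h1, h6⟩, h2⟩ := hc.1 h
    obtain ⟨m1, m2, m3⟩ := (monotone_word_iff T (fun j => by have := h1 j; omega)
      (fun i => by have := h2 i; omega)).1 h3
    refine ⟨h1, h2, m1, m2, m3, h6, ?_⟩
    have aux : ∀ j j' : Fin b, T.1 j = (2, 3) → T.1 j' = (2, 3) → ¬ j < j' := by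
      intro j j' e e' hj
      rw [← word_double] at e e'
      exact h4 _ ⟨e, word_succ_eq h3 (by simpa using hj) e e'⟩
    intro j j' e e'
    exact le_antisymm (not_lt.1 (aux j' j e' e)) (not_lt.1 (aux j j' e e'))

lemma SG2_iff {a b : ℕ} (T : TabT a b) : T ∈ SG2 a b ↔ IsLocal colsG2 forbG2 T := by
  have hc : ColsIn colsG2 T ↔ ((∀ j : Fin b, 1 ≤ (T.1 j).1 ∧ (T.1 j).1 ≤ 7 ∧ 1 ≤ (T.1 j).2 ∧
      (T.1 j).2 ≤ 7 ∧ (T.1 j).1 < (T.1 j).2) ∧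
      (∀ j : Fin b, T.1 j ≠ (2, 3) ∧ T.1 j ≠ (2, 4) ∧ T.1 j ≠ (3, 4) ∧ T.1 j ≠ (3, 5) ∧
          T.1 j ≠ (4, 5) ∧ T.1 j ≠ (4, 6) ∧ T.1 j ≠ (5, 6))) ∧
      (∀ i : Fin a, 1 ≤ T.2 i ∧ T.2 i ≤ 7) := by
    rw [← forall_and]
    refine and_congr (forall_congr' fun j => ?_) (forall_congr' fun i => ?_)
    · generalize T.1 j = c
      rcases c with ⟨p, q⟩
      constructor
      · generalize (p, q) = c
        rintro ⟨h, h8⟩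
        revert c
        decide
      · dsimp only
        rintro ⟨⟨l1, l2, l3, l4, l5⟩, h⟩
        interval_cases p <;> interval_cases q <;> first | omega | (revert h; decide)
    · simp [colsG2]
      omega
  rw [isLocal_iff]
  constructor
  · rintro ⟨h1, h2, h3, h4, h5, h6, h7, h8, h9⟩
    refine ⟨hc.2 ⟨⟨h1, h7⟩, h2⟩, (monotone_word_iff T (fun j => by have := h1 j; omega)
      (fun i => by have := h2 i; omega)).2 ⟨h3, h4, h5⟩, ?_⟩
    rintro k (⟨e, e'⟩ | ⟨e, e'⟩ | ⟨e, e'⟩)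
    · rcases word_cases T k with ⟨p, f⟩ | ⟨j, p, f⟩ | ⟨i, p, f⟩ | ⟨p, f⟩ <;>
      rcases word_cases T (k + 1) with ⟨p', f'⟩ | ⟨j', p', f'⟩ | ⟨i', p', f'⟩ | ⟨p', f'⟩ <;>
      rw [f] at e <;> rw [f'] at e' <;> try simp at e e'
      · have := h1 j
        rw [e] at this
        simp at this
      · have := h1 j
        rw [e] at this
        simp at this
      · have := h1 j'
        rw [e'] at this
        simp at this
      · have := h6 i i' e e'
        subst this
        omega
    · apply e'
      rcases word_cases T k with ⟨p, f⟩ | ⟨j, p, f⟩ | ⟨i, p, f⟩ | ⟨p, f⟩ <;>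
      rcases word_cases T (k + 1) with ⟨p', f'⟩ | ⟨j', p', f'⟩ | ⟨i', p', f'⟩ | ⟨p', f'⟩ <;>
      rw [f, f'] <;> first | omega | exact h8 j j' (by omega) | simp [g2pair2]
    · apply e'
      rcases word_cases T k with ⟨p, f⟩ | ⟨j, p, f⟩ | ⟨i, p, f⟩ | ⟨p, f⟩ <;>
      rcases word_cases T (k + 1) with ⟨p', f'⟩ | ⟨j', p', f'⟩ | ⟨i', p', f'⟩ | ⟨p', f'⟩ <;>
      rw [f, f'] <;> first
        | omega
        | exact h9 j i' (by omega) (by omega)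
        | (rw [f'] at e; have := h1 j'; omega)
        | simp [g2pair1]
  · rintro ⟨h, h3, h4⟩
    obtain ⟨⟨h1, h7⟩, h2⟩ := hc.1 h
    obtain ⟨m1, m2, m3⟩ := (monotone_word_iff T (fun j => by have := h1 j; omega)
      (fun i => by have := h2 i; omega)).1 h3
    refine ⟨h1, h2, m1, m2, m3, ?_, h7, ?_, ?_⟩
    · have aux : ∀ i i' : Fin a, T.2 i = 4 → T.2 i' = 4 → ¬ i < i' := by
        intro i i' e e' hi
        have w : word T (b + i + 1) = (4, 8) := by rw [word_single, e]
        have w' : word T (b + i' + 1) = (4, 8) := by rw [word_single, e']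
        exact h4 _ (Or.inl ⟨w, word_succ_eq h3 (by simpa using hi) w w'⟩)
      intro i i' e e'
      exact le_antisymm (not_lt.1 (aux i' i e' e)) (not_lt.1 (aux i i' e e'))
    · intro j j' hj
      by_contra hp
      refine h4 (j + 1) (Or.inr (Or.inl ?_))
      rw [word_double, ← hj, word_double]
      exact ⟨(h.1 j').2, hp⟩
    · intro j i hj hi
      by_contra hp
      refine h4 (j + 1) (Or.inr (Or.inr ?_))
      rw [word_double, show (j : ℕ) + 1 + 1 = b + i + 1 by omega, word_single]
      exact ⟨rfl, hp⟩

/-! ### Edges and one-column moves -/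

/-- The edge of color `γ` from the column `c` down to `c'`, obtained by increasing one entry of `c`
by one. The first condition keeps the length of the column. -/
def ColEdge (colEnt : ℕ → TwoColor) (γ : TwoColor) (c c' : ℕ × ℕ) : Prop :=
  (c.2 = 8 ↔ c'.2 = 8) ∧
    ((colEnt c.1 = γ ∧ c' = (c.1 + 1, c.2)) ∨ (colEnt c.2 = γ ∧ c' = (c.1, c.2 + 1)))

instance (colEnt : ℕ → TwoColor) (γ : TwoColor) : DecidableRel (ColEdge colEnt γ) := fun c c' => by
  unfold ColEdge; infer_instance

/-- `S` is obtained from `T` by changing one column along the relation `E`. -/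
def Step {a b : ℕ} (E : ℕ × ℕ → ℕ × ℕ → Prop) (T S : TabT a b) : Prop :=
  (∃ j, E (T.1 j) (S.1 j) ∧ (∀ j', j' ≠ j → S.1 j' = T.1 j') ∧ S.2 = T.2) ∨
  (∃ i, E (T.2 i, 8) (S.2 i, 8) ∧ (∀ i', i' ≠ i → S.2 i' = T.2 i') ∧ S.1 = T.1)

lemma step_flip {a b : ℕ} {E : ℕ × ℕ → ℕ × ℕ → Prop} {T S : TabT a b} :
    Step (fun c c' => E c' c) S T ↔ Step E T S := by
  unfold Step
  simp only [eq_comm]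

lemma tabCov_iff {a b : ℕ} {colEnt : ℕ → TwoColor} {SS : Set (TabT a b)} {γ : TwoColor}
    {cols : List (ℕ × ℕ)} (hS : ∀ T ∈ SS, ColsIn cols T) (S T : {T : TabT a b // T ∈ SS}) :
    tabCov colEnt SS γ S T ↔ Step (ColEdge colEnt γ) T.1 S.1 := by
  constructor
  · rintro (⟨j, h, e, r⟩ | ⟨j, h, e, r⟩ | ⟨i, h, e, r⟩)
    · exact Or.inl ⟨j, ⟨by rw [e], Or.inl ⟨h, e⟩⟩, r⟩
    · exact Or.inl ⟨j, ⟨iff_of_false ((hS _ T.2).1 j).2 ((hS _ S.2).1 j).2, Or.inr ⟨h, e⟩⟩, r⟩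
    · exact Or.inr ⟨i, ⟨by simp, Or.inl ⟨h, by rw [e]⟩⟩, r⟩
  · rintro (⟨j, ⟨-, ⟨h, e⟩ | ⟨h, e⟩⟩, r⟩ | ⟨i, ⟨-, ⟨h, e⟩ | ⟨h, e⟩⟩, r⟩)
    · exact Or.inl ⟨j, h, e, r⟩
    · exact Or.inr (Or.inl ⟨j, h, e, r⟩)
    · exact Or.inr (Or.inr ⟨i, h, by simpa using e, r⟩)
    · simp at e

/-- The sum of `φ` over the columns of `T`. -/
def total {a b : ℕ} {M : Type*} [AddCommMonoid M] (φ : ℕ × ℕ → M) (T : TabT a b) : M :=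
  ∑ j, φ (T.1 j) + ∑ i, φ (T.2 i, 8)

/-- The finite check on letters: `E` preserves the length of a column, `h` drops by one along each
`E`-edge, and a letter `c` with `0 < h c` can be moved along `E` compatibly with its neighbors `d`
and `e`, provided that `h` vanishes at the right neighbor (for `right = true`) or at the left one
(for `right = false`). -/
structure LocalMoves (cols : List (ℕ × ℕ)) (forb E : ℕ × ℕ → ℕ × ℕ → Prop) (h : ℕ × ℕ → ℕ)
    (right : Bool) : Prop where
  zero_left : h (0, 0) = 0
  zero_right : h (9, 9) = 0
  kind : ∀ c ∈ cols, ∀ c' ∈ cols, E c c' → (c.2 = 8 ↔ c'.2 = 8)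
  drop : ∀ c ∈ cols, ∀ c' ∈ cols, E c c' → h c = h c' + 1
  move : ∀ c ∈ cols, 0 < h c →
    ∀ d ∈ (0, 0) :: (9, 9) :: cols, Compat forb d c →
    ∀ e ∈ (0, 0) :: (9, 9) :: cols, Compat forb c e → h (if right then e else d) = 0 →
    ∃ c' ∈ cols, E c c' ∧ Compat forb d c' ∧ Compat forb c' e

lemma total_drop {a b : ℕ} {cols : List (ℕ × ℕ)} {forb E : ℕ × ℕ → ℕ × ℕ → Prop} {h : ℕ × ℕ → ℕ}
    {right : Bool} (L : LocalMoves cols forb E h right) {S T : TabT a b} (hS : ColsIn cols S)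
    (hT : ColsIn cols T) (hST : Step E T S) : total h T = total h S + 1 := by
  unfold total
  rcases hST with ⟨j, e, hj, h2⟩ | ⟨i, e, hi, h1⟩
  · rw [h2, ← Finset.add_sum_erase _ _ (Finset.mem_univ j),
      ← Finset.add_sum_erase _ (fun j => h (S.1 j)) (Finset.mem_univ j),
      Finset.sum_congr (s₁ := Finset.univ.erase j) rfl fun j' hj' => by
        rw [← hj j' (Finset.ne_of_mem_erase hj')],
      L.drop _ (hT.1 j).1 _ (hS.1 j).1 e]
    ring
  · rw [h1, ← Finset.add_sum_erase _ (fun i => h (T.2 i, 8)) (Finset.mem_univ i),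
      ← Finset.add_sum_erase _ (fun i => h (S.2 i, 8)) (Finset.mem_univ i),
      Finset.sum_congr (s₁ := Finset.univ.erase i) rfl fun i' hi' => by
        rw [← hi i' (Finset.ne_of_mem_erase hi')],
      L.drop _ (hT.2 i) _ (hS.2 i) e]
    ring

/-- A letter of the word of `T` may be replaced if the result is compatible with its neighbors. -/
lemma exists_step {a b : ℕ} {cols : List (ℕ × ℕ)} {forb E : ℕ × ℕ → ℕ × ℕ → Prop} {T : TabT a b}
    (hT : IsLocal cols forb T) {k : ℕ} (h9 : word T (k + 1) ≠ (9, 9)) {c' : ℕ × ℕ} (hc' : c' ∈ cols)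
    (hE : E (word T (k + 1)) c') (hk : (word T (k + 1)).2 = 8 ↔ c'.2 = 8)
    (hl : Compat forb (word T k) c') (hr : Compat forb c' (word T (k + 2))) :
    ∃ S, IsLocal cols forb S ∧ Step E T S := by
  have loc : ∀ S : TabT a b, ColsIn cols S → word S = Function.update (word T) (k + 1) c' →
      IsLocal cols forb S := by
    refine fun S hS hw => ⟨hS, fun m => ?_⟩
    rw [hw]
    rcases eq_or_ne m k with rfl | h1
    · simpa using hl
    rcases eq_or_ne m (k + 1) with rfl | h2
    · simpa using hr
    · rw [Function.update_of_ne h2, Function.update_of_ne (by omega)]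
      exact hT.2 m
  rcases word_cases T (k + 1) with ⟨p, -⟩ | ⟨j, p, e⟩ | ⟨i, p, e⟩ | ⟨-, e⟩
  · omega
  · have hj : c'.2 ≠ 8 := by
      rw [e] at hk
      exact fun h => (hT.1.1 j).2 (hk.2 h)
    refine ⟨(Function.update T.1 j c', T.2), loc _ ⟨fun j' => ?_, hT.1.2⟩ ?_,
      Or.inl ⟨j, ?_, ?_, rfl⟩⟩
    · rcases eq_or_ne j' j with rfl | h
      · simpa using ⟨hc', hj⟩
      · simpa [h] using hT.1.1 j'
    · funext m
      rcases m with _ | m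
      · simp [word]
      · have : k = j := by omega
        subst this
        by_cases hm : m < b
        · simp [word, hm, Function.update_apply, Fin.ext_iff]
        · have : m ≠ j := by omega
          simp [word, hm, this]
    · simpa [← e] using hE
    · intro j' h
      simp [h]
  · rw [e] at hk
    have h8 : c' = (c'.1, 8) := Prod.ext rfl (hk.1 rfl)
    refine ⟨(T.1, Function.update T.2 i c'.1), loc _ ⟨hT.1.1, fun i' => ?_⟩ ?_,
      Or.inr ⟨i, ?_, ?_, rfl⟩⟩
    · rcases eq_or_ne i' i with rfl | h
      · simpa [← h8] using hc'
      · simpa [h] using hT.1.2 i'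
    · funext m
      rcases m with _ | m
      · simp [word]
      · have : k = b + i := by omega
        subst this
        by_cases hm : m < b
        · have : m ≠ b + i := by omega
          simp [word, hm, this]
        · by_cases hm' : m - b < a
          · have : m - b = i ↔ m = b + i := by omega
            by_cases hmi : m = b + i
            · simpa [word, hm, hm', Function.update_apply, Fin.ext_iff, this, hmi] using h8.symm
            · simp [word, hm, hm', Fin.ext_iff, this, hmi]
          · have : m ≠ b + i := by omega
            simp [word, hm, hm', this]
    · simpa [← e, ← h8] using hE
    · intro i' h
      simp [h]
  · exact absurd e h9

/-- While the sum of `h` over the columns is positive, some column can be moved. -/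
lemma exists_step_of_pos {a b : ℕ} {cols : List (ℕ × ℕ)} {forb E : ℕ × ℕ → ℕ × ℕ → Prop}
    {h : ℕ × ℕ → ℕ} {right : Bool} (L : LocalMoves cols forb E h right) {T : TabT a b}
    (hT : IsLocal cols forb T) (hpos : 0 < total h T) :
    ∃ S, IsLocal cols forb S ∧ Step E T S := by
  have hex : ∃ k, 0 < h (word T k) := by
    by_contra! hn
    have h1 : ∀ j, h (T.1 j) = 0 := fun j => by
      rw [← word_double]; exact Nat.le_zero.1 (hn _)
    have h2 : ∀ i, h (T.2 i, 8) = 0 := fun i => by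
      rw [← word_single]; exact Nat.le_zero.1 (hn _)
    simp [total, h1, h2] at hpos
  have hbd : ∀ k, 0 < h (word T k) → k ≤ a + b := by
    intro k hk
    rcases word_cases T k with ⟨p, e⟩ | ⟨j, p, e⟩ | ⟨i, p, e⟩ | ⟨p, e⟩
    · omega
    · omega
    · omega
    · rw [e, L.zero_right] at hk
      omega
  -- The rightmost, respectively leftmost, index at which `h` is positive.
  obtain ⟨k, hk, hside⟩ : ∃ k, 0 < h (word T (k + 1)) ∧
      h (if right then word T (k + 2) else word T k) = 0 := by
    obtain ⟨k₀, hk₀⟩ := hex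
    cases right
    · have hf := Nat.find_spec (p := fun k => 0 < h (word T k)) ⟨k₀, hk₀⟩
      have hm := fun m => Nat.find_min (p := fun k => 0 < h (word T k)) ⟨k₀, hk₀⟩ (m := m)
      generalize Nat.find (p := fun k => 0 < h (word T k)) ⟨k₀, hk₀⟩ = k at hf hm
      rcases k with _ | k
      · simp [word, L.zero_left] at hf
      · exact ⟨k, hf, by simpa using hm k (by omega)⟩
    · have hf := Nat.findGreatest_spec (P := fun k => 0 < h (word T k)) (hbd k₀ hk₀) hk₀
      have hm := fun m => Nat.findGreatest_is_greatest (P := fun k => 0 < h (word T k))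
        (n := a + b) (k := m)
      generalize Nat.findGreatest (fun k => 0 < h (word T k)) (a + b) = k at hf hm
      rcases k with _ | k
      · simp [word, L.zero_left] at hf
      · refine ⟨k, hf, ?_⟩
        by_contra hne
        have hp : 0 < h (word T (k + 2)) := Nat.pos_of_ne_zero hne
        exact hm (k + 2) (by omega) (hbd _ hp) hp
  have h9 : word T (k + 1) ≠ (9, 9) := by
    intro e
    rw [e, L.zero_right] at hk
    omega
  have hc : word T (k + 1) ∈ cols := by
    have hm := word_mem hT.1 (k + 1)
    rw [List.mem_cons, List.mem_cons] at hm
    rcases hm with e | e | e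
    · rw [e, L.zero_left] at hk
      omega
    · exact absurd e h9
    · exact e
  obtain ⟨c', hc', hE, hl, hr⟩ := L.move _ hc hk _ (word_mem hT.1 k) (hT.2 k)
    _ (word_mem hT.1 (k + 2)) (hT.2 (k + 1)) hside
  exact exists_step hT h9 hc' hE (L.kind _ hc _ hc' hE) hl hr

/-! ### The weight as a sum over columns -/

/-- The maximal length, capped at `n`, of an `E`-chain in `cols` starting at a given column. -/
def colHeight (cols : List (ℕ × ℕ)) (E : ℕ × ℕ → ℕ × ℕ → Prop) [DecidableRel E] :
    ℕ → ℕ × ℕ → ℕ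
  | 0, _ => 0
  | n + 1, c => ((cols.filter fun c' => E c c').map fun c' => colHeight cols E n c' + 1).foldr max 0

lemma rhoOf_sub_deltaOf {a b : ℕ} {colEnt : ℕ → TwoColor} {SS : Set (TabT a b)} {γ : TwoColor}
    {cols : List (ℕ × ℕ)} {forb : ℕ × ℕ → ℕ × ℕ → Prop} {hd hu : ℕ × ℕ → ℕ} {w : ℕ × ℕ → ℤ}
    (hS : ∀ T, T ∈ SS ↔ IsLocal cols forb T)
    (Ld : LocalMoves cols forb (ColEdge colEnt γ) hd true)
    (Lu : LocalMoves cols forb (fun c c' => ColEdge colEnt γ c' c) hu false)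
    (hw : ∀ c ∈ cols, (hd c : ℤ) - hu c = w c) (T : {T : TabT a b // T ∈ SS}) :
    (rhoOf (tabCov colEnt SS γ) T : ℤ) - deltaOf (tabCov colEnt SS γ) T = total w T.1 := by
  have hC : ∀ T ∈ SS, ColsIn cols T := fun T h => ((hS T).1 h).1
  rw [rhoOf_eq _ (fun T => total hd T.1), deltaOf_eq _ (fun T => total hu T.1)]
  · have hv := hC T.1 T.2
    unfold total
    rw [← Finset.sum_congr rfl fun j _ => hw _ (hv.1 j).1,
      ← Finset.sum_congr rfl fun i _ => hw _ (hv.2 i)]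
    push_cast
    rw [Finset.sum_sub_distrib, Finset.sum_sub_distrib]
    ring
  · exact fun S T h => total_drop Lu (hC _ T.2) (hC _ S.2) (step_flip.2 ((tabCov_iff hC S T).1 h))
  · intro S h
    obtain ⟨T, h1, h2⟩ := exists_step_of_pos Lu ((hS _).1 S.2) h
    exact ⟨⟨T, (hS _).2 h1⟩, (tabCov_iff hC _ _).2 (step_flip.1 h2)⟩
  · exact fun S T h => total_drop Ld (hC _ S.2) (hC _ T.2) ((tabCov_iff hC S T).1 h)
  · intro T h
    obtain ⟨S, h1, h2⟩ := exists_step_of_pos Ld ((hS _).1 T.2) h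
    exact ⟨⟨S, (hS _).2 h1⟩, (tabCov_iff hC _ _).2 h2⟩

/-- The number of entries of the column `c` equal to `k`. -/
def colCount (k : ℕ) (c : ℕ × ℕ) : ℤ := (if c.1 = k then 1 else 0) + (if c.2 = k then 1 else 0)

lemma nkOf_eq {a b : ℕ} (T : TabT a b) (k : ℕ) (hk : k < 8) :
    (nkOf T k : ℤ) = total (colCount k) T := by
  have : 8 ≠ k := by omega
  simp [nkOf, total, colCount, Finset.sum_add_distrib, this]

/-! ### The finite checks -/

lemma localMoves_down_A2 (γ : TwoColor) : LocalMoves colsA2 forbA2 (ColEdge colEntA2 γ)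
    (colHeight colsA2 (ColEdge colEntA2 γ) 4) true := by
  cases γ <;> constructor <;> decide +kernel

lemma localMoves_up_A2 (γ : TwoColor) : LocalMoves colsA2 forbA2
    (fun c c' => ColEdge colEntA2 γ c' c)
    (colHeight colsA2 (fun c c' => ColEdge colEntA2 γ c' c) 4) false := by
  cases γ <;> constructor <;> decide +kernel

lemma localMoves_down_C2 (γ : TwoColor) : LocalMoves colsC2 forbC2 (ColEdge colEntC2 γ)
    (colHeight colsC2 (ColEdge colEntC2 γ) 4) true := by
  cases γ <;> constructor <;> decide +kernel

lemma localMoves_up_C2 (γ : TwoColor) : LocalMoves colsC2 forbC2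
    (fun c c' => ColEdge colEntC2 γ c' c)
    (colHeight colsC2 (fun c c' => ColEdge colEntC2 γ c' c) 4) false := by
  cases γ <;> constructor <;> decide +kernel

lemma localMoves_down_G2 (γ : TwoColor) : LocalMoves colsG2 forbG2 (ColEdge colEntG2 γ)
    (colHeight colsG2 (ColEdge colEntG2 γ) 4) true := by
  cases γ <;> constructor <;> decide +kernel

lemma localMoves_up_G2 (γ : TwoColor) : LocalMoves colsG2 forbG2
    (fun c c' => ColEdge colEntG2 γ c' c)
    (colHeight colsG2 (fun c c' => ColEdge colEntG2 γ c' c) 4) false := by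
  cases γ <;> constructor <;> decide +kernel

/-- Weight formulas in terms of entry counts: for each `g ∈ {A2, C2, G2}` and every
tableau `T` in the edge-colored lattice `L_g(a,b)`, the weight `wt(T)` computed from
the edge-colored covering structure equals the stated combination of the
entry counts `n_k(T)`. -/
theorem wt_eq_tableau_weight (a b : ℕ) :
    (∀ T : {T : TabT a b // T ∈ SA2 a b},
        wtOf (covA2 a b) T =
          ((nkOf T.1 1 : ℤ) - (nkOf T.1 2 : ℤ),
           (nkOf T.1 2 : ℤ) - (nkOf T.1 3 : ℤ))) ∧
    (∀ T : {T : TabT a b // T ∈ SC2 a b},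
        wtOf (covC2 a b) T =
          ((nkOf T.1 1 : ℤ) - (nkOf T.1 2 : ℤ) + (nkOf T.1 3 : ℤ) - (nkOf T.1 4 : ℤ),
           (nkOf T.1 2 : ℤ) - (nkOf T.1 3 : ℤ))) ∧
    (∀ T : {T : TabT a b // T ∈ SG2 a b},
        wtOf (covG2 a b) T =
          ((nkOf T.1 1 : ℤ) - (nkOf T.1 2 : ℤ) + 2 * (nkOf T.1 3 : ℤ)
             - 2 * (nkOf T.1 5 : ℤ) + (nkOf T.1 6 : ℤ) - (nkOf T.1 7 : ℤ),
           (nkOf T.1 2 : ℤ) - (nkOf T.1 3 : ℤ) + (nkOf T.1 5 : ℤ) - (nkOf T.1 6 : ℤ))) := by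
  refine ⟨fun T => Prod.ext ?_ ?_, fun T => Prod.ext ?_ ?_, fun T => Prod.ext ?_ ?_⟩
  · refine (rhoOf_sub_deltaOf (w := fun c => colCount 1 c - colCount 2 c) SA2_iff
      (localMoves_down_A2 .alpha) (localMoves_up_A2 .alpha) (by decide +kernel) T).trans ?_
    simp only [nkOf_eq, Nat.reduceLT, total, Finset.sum_sub_distrib]
    ring
  · refine (rhoOf_sub_deltaOf (w := fun c => colCount 2 c - colCount 3 c) SA2_iff
      (localMoves_down_A2 .beta) (localMoves_up_A2 .beta) (by decide +kernel) T).trans ?_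
    simp only [nkOf_eq, Nat.reduceLT, total, Finset.sum_sub_distrib]
    ring
  · refine (rhoOf_sub_deltaOf
      (w := fun c => colCount 1 c - colCount 2 c + colCount 3 c - colCount 4 c) SC2_iff
      (localMoves_down_C2 .alpha) (localMoves_up_C2 .alpha) (by decide +kernel) T).trans ?_
    simp only [nkOf_eq, Nat.reduceLT, total, Finset.sum_sub_distrib, Finset.sum_add_distrib]
    ring
  · refine (rhoOf_sub_deltaOf (w := fun c => colCount 2 c - colCount 3 c) SC2_iff
      (localMoves_down_C2 .beta) (localMoves_up_C2 .beta) (by decide +kernel) T).trans ?_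
    simp only [nkOf_eq, Nat.reduceLT, total, Finset.sum_sub_distrib]
    ring
  · refine (rhoOf_sub_deltaOf
      (w := fun c => colCount 1 c - colCount 2 c + 2 * colCount 3 c - 2 * colCount 5 c
        + colCount 6 c - colCount 7 c) SG2_iff
      (localMoves_down_G2 .alpha) (localMoves_up_G2 .alpha) (by decide +kernel) T).trans ?_
    simp only [nkOf_eq, Nat.reduceLT, total, Finset.sum_sub_distrib, Finset.sum_add_distrib,
      ← Finset.mul_sum]
    ring
  · refine (rhoOf_sub_deltaOf
      (w := fun c => colCount 2 c - colCount 3 c + colCount 5 c - colCount 6 c) SG2_iff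
      (localMoves_down_G2 .beta) (localMoves_up_G2 .beta) (by decide +kernel) T).trans ?_
    simp only [nkOf_eq, Nat.reduceLT, total, Finset.sum_sub_distrib, Finset.sum_add_distrib]
    ring
end
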